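/- There are infinitely many integers m ≥ 2 such that Ω(m(m^2 − 1)) ≤ 11, i.e. the set of integers m ≥ 2 with Ω(m^3 − m) ≤ 11 is infinite. -/

import Mathlib

/-!
For `m = 36 n + 6` one has `m ^ 3 - m = 6 F(n)` with `F(n) = (6 n + 1) (36 n + 5) (36 n + 7)`
coprime to `6`, so it is enough to find arbitrarily large `n` with `Ω(F(n)) ≤ 9`. This is done by a
weighted Selberg sieve of dimension `3`.

Let `X = log R`, let `h` be Selberg's multiplicative function with `h(p) = 3 / (p - 3)`, and let
`w(n) = (∑_{d ∣ F(n)} λ_d) ^ 2` be the sieve weight of level `R` whose diagonalising variables are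
`ℓ(r) = log⁺ (R / r)`. With `T_j = ∑ h(r) ℓ(r) ^ j` and up to rounding errors, the total weight over
`n ∈ [N, 2N)` is `N T₂` (`wsum_one_ge`), and the weight of those `n` with `p ^ a ∣ F(n)` is at most
`N (3 / p ^ a) ∑ h(r) min(log p, ℓ(r)) ^ 2` (`wsum_prime_pow_le`).

Suppose that `Ω(F(n)) ≥ 10` throughout the interval. The logarithmic weights `1 - log p / Y` with
`Y = 2 X` (`cardFactors_le`) bound `Ω(F) - log F / Y` by a sum over the primes `p ≤ R ^ 2` dividing
`F`, plus a contribution from higher prime powers. Average this against `w`. By Mertens' theorem,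
the prime sum belonging to a fixed `r` is about `ℓ ^ 2 (log (Y / ℓ) - 1 / 2 + 2 ℓ / (3 Y))`, which
is at most `(log 5 - 11 / 30) ℓ ^ 2 + (26 / 75) (X ℓ - (5 / 2) ℓ ^ 2)`
(`exists_sum_primeWeight_min_sq_le`). This majorant touches at `ℓ / X = 2 / 5`; since
`X T₁ ≤ (5 / 2) T₂ + O(T₁)` (`exists_mom_one_le`), its second part is negligible after summation
over `r`. Higher prime powers contribute `O(T₁) = O(T₂ / X)`.

With `R = k ^ 8` and `N = k ^ 33`, `log F / Y` is about `3 * 33 / 16 = 6.1875`, and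
`3 (log 5 - 11 / 30) < 3.7525`, so the average is below `9.95 < 10` once the rounding errors, of
total size `R ^ (4 + 0.06 + o(1))`, are compared with `N = R ^ (4.125)`. This contradiction for
large `k` proves the theorem.
-/

section

open Finset

namespace OmegaSieve

/-! ### Sums over primes -/

lemma exists_sum_log_div_sq_le :
    ∃ C : ℝ, 0 < C ∧ ∀ s : Finset ℕ, ∑ k ∈ s, Real.log k / (k : ℝ) ^ 2 ≤ C := by
  have hs : Summable (fun k : ℕ => Real.log k / (k : ℝ) ^ 2) := by
    have h1 : Summable (fun k : ℕ => 2 * (((k : ℝ) ^ (3 / 2 : ℝ))⁻¹)) :=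
      (Real.summable_nat_rpow_inv.2 (by norm_num)).mul_left 2
    refine Summable.of_nonneg_of_le (fun k => ?_) (fun k => ?_) h1
    · exact div_nonneg (Real.log_natCast_nonneg k) (by positivity)
    · rcases Nat.eq_zero_or_pos k with rfl | hk
      · simp
      have hk' : (0 : ℝ) < k := by exact_mod_cast hk
      have h2 := Real.log_le_rpow_div hk'.le (show (0 : ℝ) < 1 / 2 by norm_num)
      have h3 : (k : ℝ) ^ 2 = (k : ℝ) ^ (1 / 2 : ℝ) * (k : ℝ) ^ (3 / 2 : ℝ) := by
        rw [← Real.rpow_add hk', ← Real.rpow_natCast]; norm_num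
      rw [h3]
      have h4 : (0 : ℝ) < (k : ℝ) ^ (1 / 2 : ℝ) := by positivity
      have h5 : (0 : ℝ) < (k : ℝ) ^ (3 / 2 : ℝ) := by positivity
      rw [div_le_iff₀ (by positivity)]
      have : 2 * ((k : ℝ) ^ (3 / 2 : ℝ))⁻¹ * ((k : ℝ) ^ (1 / 2 : ℝ) * (k : ℝ) ^ (3 / 2 : ℝ))
          = 2 * (k : ℝ) ^ (1 / 2 : ℝ) := by field_simp
      rw [this]
      linarith
  refine ⟨∑' k : ℕ, Real.log k / (k : ℝ) ^ 2 + 1, ?_, fun s => ?_⟩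
  · have : 0 ≤ ∑' k : ℕ, Real.log k / (k : ℝ) ^ 2 :=
      tsum_nonneg fun k => div_nonneg (Real.log_natCast_nonneg k) (by positivity)
    linarith
  · have := hs.sum_le_tsum s
      (fun k _ => div_nonneg (Real.log_natCast_nonneg k) (by positivity))
    linarith

/-- The weight `log p / p` on primes, extended by zero. -/
noncomputable def primeWeight (k : ℕ) : ℝ := if k.Prime then Real.log k / k else 0

lemma primeWeight_nonneg (k : ℕ) : 0 ≤ primeWeight k := by
  unfold primeWeight
  split_ifs
  · exact div_nonneg (Real.log_natCast_nonneg k) (by positivity)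
  · exact le_rfl

lemma log_factorial_eq_sum (n : ℕ) :
    Real.log (n.factorial) =
      ∑ p ∈ Icc 1 n with p.Prime, (n.factorial.factorization p : ℝ) * Real.log p := by
  have h0 := Nat.factorial_ne_zero n
  conv_lhs => rw [← Nat.prod_factorization_pow_eq_self h0]
  rw [Nat.prod_factorization_eq_prod_primeFactors, Nat.cast_prod, Real.log_prod]
  · have : n.factorial.primeFactors = (Icc 1 n).filter Nat.Prime := by
      ext p
      simp only [Nat.mem_primeFactors, mem_filter, mem_Icc]
      constructor
      · rintro ⟨hp, hd, -⟩
        exact ⟨⟨hp.one_le, (hp.dvd_factorial).1 hd⟩, hp⟩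
      · rintro ⟨⟨_, h2⟩, hp⟩
        exact ⟨hp, (hp.dvd_factorial).2 h2, h0⟩
    rw [this]
    refine sum_congr rfl fun p _ => ?_
    push_cast
    rw [Real.log_pow]
  · intro p hp
    have := (Nat.prime_of_mem_primeFactors hp).pos
    positivity

/-- Mertens' first theorem. -/
lemma exists_mertens :
    ∃ B : ℝ, 0 < B ∧ ∀ n : ℕ, 1 ≤ n →
      |∑ k ∈ Icc 1 n, primeWeight k - Real.log n| ≤ B := by
  obtain ⟨C, hC, hsum⟩ := exists_sum_log_div_sq_le
  refine ⟨Real.log 4 + 1 + 2 * C, by have := Real.log_pos (show (1:ℝ) < 4 by norm_num); positivity,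
    fun n hn => ?_⟩
  have hn' : (0 : ℝ) < n := by exact_mod_cast hn
  have hA : ∑ k ∈ Icc 1 n, primeWeight k = ∑ p ∈ Icc 1 n with p.Prime, Real.log p / p := by
    rw [sum_filter]; rfl
  have hl4 := Real.log_pos (show (1:ℝ) < 4 by norm_num)
  rw [hA, abs_le]
  have hf := log_factorial_eq_sum n
  constructor
  · have h1 : (n : ℝ) * Real.log n - n ≤ Real.log n.factorial := by
      have := Stirling.le_log_factorial_stirling (n := n) (by omega)
      have h2 : 0 ≤ Real.log n := Real.log_natCast_nonneg n
      have h3 : 0 ≤ Real.log (2 * Real.pi) := Real.log_nonneg (by nlinarith [Real.pi_gt_three])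
      linarith
    have h2 : Real.log n.factorial ≤
        n * (∑ p ∈ Icc 1 n with p.Prime, Real.log p / p) + n * (2 * C) := by
      have h4 : ∑ p ∈ Icc 1 n with p.Prime, 2 * (Real.log p / (p : ℝ) ^ 2) ≤ 2 * C := by
        rw [← mul_sum]; linarith [hsum ((Icc 1 n).filter Nat.Prime)]
      rw [hf]
      refine le_trans ?_ (add_le_add le_rfl (mul_le_mul_of_nonneg_left h4 hn'.le))
      rw [mul_sum, mul_sum, ← sum_add_distrib]
      refine sum_le_sum fun p hp => ?_
      have hp' := (mem_filter.1 hp).2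
      have := Fact.mk hp'
      have h5 := sub_one_mul_padicValNat_factorial (p := p) n
      have h6 : (p - 1) * n.factorial.factorization p ≤ n := by
        rw [Nat.factorization_def _ hp', h5]; omega
      have hp2 : (2 : ℝ) ≤ p := by exact_mod_cast hp'.two_le
      have h7 : ((p : ℝ) - 1) * n.factorial.factorization p ≤ n := by
        have : (((p - 1 : ℕ) : ℝ)) * n.factorial.factorization p ≤ n := by exact_mod_cast h6
        rwa [Nat.cast_sub hp'.one_le, Nat.cast_one] at this
      have h8 : (n.factorial.factorization p : ℝ) ≤ n * (1 / p) + n * (2 / p ^ 2) := by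
        have h9 : (n.factorial.factorization p : ℝ) ≤ n / (p - 1) := by
          rw [le_div_iff₀ (by linarith)]; linarith
        have h10 : 1 / ((p : ℝ) - 1) ≤ 1 / p + 2 / p ^ 2 := by
          rw [div_add_div _ _ (by positivity) (by positivity), div_le_div_iff₀ (by linarith) (by positivity)]
          nlinarith
        calc _ ≤ (n : ℝ) / (p - 1) := h9
          _ = n * (1 / ((p : ℝ) - 1)) := by ring
          _ ≤ n * (1 / p + 2 / p ^ 2) := by gcongr
          _ = _ := by ring
      have hlp : 0 ≤ Real.log p := Real.log_natCast_nonneg p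
      calc _ ≤ (n * (1 / p) + n * (2 / p ^ 2)) * Real.log p := by gcongr
        _ = _ := by ring
    have h3 : (n : ℝ) * Real.log n - n ≤
        n * (∑ p ∈ Icc 1 n with p.Prime, Real.log p / p) + n * (2 * C) := h1.trans h2
    have h4 : (n:ℝ) * (Real.log n - 1) ≤
        n * ((∑ p ∈ Icc 1 n with p.Prime, Real.log p / p) + 2 * C) := by linarith
    have := le_of_mul_le_mul_left h4 hn'
    linarith
  · have h1 : Real.log n.factorial ≤ n * Real.log n := by
      rw [← Real.log_pow]
      refine Real.log_le_log (by exact_mod_cast Nat.factorial_pos n) ?_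
      exact_mod_cast Nat.factorial_le_pow n
    have hθ := Chebyshev.theta_le_log4_mul_x (x := n) (by positivity)
    have hθ' : Chebyshev.theta n = ∑ p ∈ Icc 1 n with p.Prime, Real.log p := by
      unfold Chebyshev.theta
      rw [Nat.floor_natCast]; rfl
    have h2 : n * (∑ p ∈ Icc 1 n with p.Prime, Real.log p / p) - Chebyshev.theta n ≤
        Real.log n.factorial := by
      rw [hf, hθ', mul_sum, ← sum_sub_distrib]
      refine sum_le_sum fun p hp => ?_
      have hp' := (mem_filter.1 hp).2
      have hp2 : (2 : ℝ) ≤ p := by exact_mod_cast hp'.two_le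
      have hlp : 0 ≤ Real.log p := Real.log_natCast_nonneg p
      have h5 : n / p ≤ n.factorial.factorization p := by
        rw [← hp'.pow_dvd_iff_le_factorization (Nat.factorial_ne_zero n)]
        have h6 : p ^ (n / p) ∣ (p * (n / p)).factorial := by
          generalize n / p = k
          induction k with
          | zero => simp
          | succ k ih =>
            have h7 : p * (k + 1) = (p * k + (p - 1)) + 1 := by
              have := hp'.one_le
              rw [mul_add]; omega
            rw [h7, Nat.factorial_succ, ← h7, pow_succ, mul_comm]
            exact mul_dvd_mul (dvd_mul_right _ _)
              (ih.trans (Nat.factorial_dvd_factorial (by omega)))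
        exact h6.trans (Nat.factorial_dvd_factorial (Nat.mul_div_le n p))
      have h6 : (n : ℝ) / p - 1 ≤ n.factorial.factorization p := by
        have h7 : (n : ℝ) / p - 1 ≤ ((n / p : ℕ) : ℝ) := by
          have := Nat.lt_floor_add_one ((n : ℝ) / p)
          rw [Nat.floor_div_natCast, Nat.floor_natCast] at this
          linarith
        exact h7.trans (by exact_mod_cast h5)
      calc _ = ((n : ℝ) / p - 1) * Real.log p := by ring
        _ ≤ _ := by gcongr
    have h4 : (n:ℝ) * (∑ p ∈ Icc 1 n with p.Prime, Real.log p / p) ≤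
        n * (Real.log n + Real.log 4) := by linarith
    have := le_of_mul_le_mul_left h4 hn'
    linarith

/-- Prime sums against a bounded monotone function agree with the corresponding integral in
`log p`, up to a bounded multiple of the sup norm. -/
lemma exists_prime_sum_monotone :
    ∃ C : ℝ, 0 < C ∧ ∀ (f : ℝ → ℝ) (M : ℝ) (n : ℕ), 1 ≤ n → MonotoneOn f (Set.Ici 0) →
      (∀ u, 0 ≤ u → |f u| ≤ M) →
      |∑ k ∈ Icc 1 n, primeWeight k * f (Real.log k) - ∫ u in (0 : ℝ)..Real.log n, f u|
        ≤ C * M := by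
  obtain ⟨B, hB, hmert⟩ := exists_mertens
  refine ⟨3 * B + 2, by positivity, fun f M n hn hf hM => ?_⟩
  have hlog : ∀ k : ℕ, 0 ≤ Real.log k := fun k => Real.log_natCast_nonneg k
  have hIntble : ∀ a b : ℝ, 0 ≤ a → 0 ≤ b → IntervalIntegrable f MeasureTheory.volume a b := by
    intro a b ha hb
    apply MonotoneOn.intervalIntegrable
    refine hf.mono ?_
    intro x hx
    exact le_trans (le_min ha hb) hx.1
  -- Abel summation: the left side changes at each step by at most `(B + 1)` times the increment
  -- of `f`
  have key : |(∑ k ∈ Icc 1 n, primeWeight k * f (Real.log k) - ∫ u in (0 : ℝ)..Real.log n, f u)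
      - (∑ k ∈ Icc 1 n, primeWeight k - Real.log n) * f (Real.log n)|
      ≤ (B + 1) * (f (Real.log n) - f 0) := by
    induction n, hn using Nat.le_induction with
    | base => simp [primeWeight]
    | succ n hn ih =>
      rw [sum_Icc_succ_top (by omega), sum_Icc_succ_top (by omega)]
      have hsplit : ∫ u in (0 : ℝ)..Real.log (n + 1 : ℕ), f u =
          (∫ u in (0 : ℝ)..Real.log n, f u) + ∫ u in Real.log n..Real.log (n + 1 : ℕ), f u :=
        (intervalIntegral.integral_add_adjacent_intervals (hIntble _ _ le_rfl (hlog _))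
          (hIntble _ _ (hlog _) (hlog _))).symm
      rw [hsplit]
      have hn' : (1 : ℝ) ≤ n := by exact_mod_cast hn
      have hle : Real.log n ≤ Real.log (n + 1 : ℕ) :=
        Real.log_le_log (by linarith) (by push_cast; linarith)
      have hb : Real.log (n + 1 : ℕ) - Real.log n ≤ 1 := by
        rw [← Real.log_div (by positivity) (by positivity)]
        refine (Real.log_le_sub_one_of_pos (by positivity)).trans ?_
        rw [sub_le_iff_le_add, div_le_iff₀ (by linarith)]
        push_cast; linarith
      have hmono : f (Real.log n) ≤ f (Real.log (n + 1 : ℕ)) := hf (hlog _) (hlog _) hle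
      have hI1 : (Real.log (n + 1 : ℕ) - Real.log n) * f (Real.log n) ≤
          ∫ u in Real.log n..Real.log (n + 1 : ℕ), f u := by
        have := intervalIntegral.integral_mono_on (f := fun _ => f (Real.log n)) (g := f) hle
          (by simp) (hIntble _ _ (hlog _) (hlog _))
          (fun x hx => hf (hlog _) ((hlog n).trans hx.1) hx.1)
        simpa using this
      have hI2 : ∫ u in Real.log n..Real.log (n + 1 : ℕ), f u ≤
          (Real.log (n + 1 : ℕ) - Real.log n) * f (Real.log (n + 1 : ℕ)) := by
        have := intervalIntegral.integral_mono_on (g := fun _ => f (Real.log (n + 1 : ℕ)))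
          (f := f) hle (hIntble _ _ (hlog _) (hlog _)) (by simp)
          (fun x hx => hf ((hlog n).trans hx.1) (hlog _) hx.2)
        simpa using this
      have hD := hmert n hn
      set I := ∫ u in Real.log n..Real.log (n + 1 : ℕ), f u
      set J := ∫ u in (0 : ℝ)..Real.log n, f u
      set S := ∑ k ∈ Icc 1 n, primeWeight k * f (Real.log k)
      set A := ∑ k ∈ Icc 1 n, primeWeight k
      set a := primeWeight (n + 1)
      set x := Real.log n
      set x' := Real.log (n + 1 : ℕ)
      rw [abs_le] at ih hD ⊢
      have hE1 : (A - x) * (f x' - f x) ≤ B * (f x' - f x) :=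
        mul_le_mul_of_nonneg_right hD.2 (by linarith)
      have hE2 : -B * (f x' - f x) ≤ (A - x) * (f x' - f x) :=
        mul_le_mul_of_nonneg_right hD.1 (by linarith)
      have hE3 : (x' - x) * (f x' - f x) ≤ 1 * (f x' - f x) :=
        mul_le_mul_of_nonneg_right hb (by linarith)
      constructor <;> nlinarith
  have h1 := hmert n hn
  have h2 := hM _ (hlog n)
  have h3 := hM 0 le_rfl
  have h4 : |(∑ k ∈ Icc 1 n, primeWeight k - Real.log n) * f (Real.log n)| ≤ B * M := by
    rw [abs_mul]; exact mul_le_mul h1 h2 (abs_nonneg _) hB.le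
  have h5 : (B + 1) * (f (Real.log n) - f 0) ≤ (B + 1) * (2 * M) := by
    have := abs_le.1 h2; have := abs_le.1 h3
    apply mul_le_mul_of_nonneg_left _ (by linarith); linarith
  rw [abs_le] at key h4 ⊢
  constructor <;> linarith

lemma exists_sum_primeWeight_mul_sub_le :
    ∃ C : ℝ, 0 < C ∧ ∀ (n : ℕ) (L : ℝ), 1 ≤ n → 0 ≤ L → L ≤ Real.log n →
      ∑ k ∈ Icc 1 n, primeWeight k * max 0 (L - Real.log k) ≤ L ^ 2 / 2 + C * L := by
  obtain ⟨C, hC, h⟩ := exists_prime_sum_monotone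
  refine ⟨C, hC, fun n L hn hL hLn => ?_⟩
  have h1 := h (fun u => - max 0 (L - u)) L n hn ?_ ?_
  · have hcont : Continuous fun u : ℝ => max 0 (L - u) := by fun_prop
    have hI : ∫ u in (0 : ℝ)..Real.log n, max 0 (L - u) = L ^ 2 / 2 := by
      rw [← intervalIntegral.integral_add_adjacent_intervals (b := L)
        (hcont.intervalIntegrable _ _) (hcont.intervalIntegrable _ _)]
      have e1 : ∫ u in (0 : ℝ)..L, max 0 (L - u) = ∫ u in (0 : ℝ)..L, (L - u) := by
        apply intervalIntegral.integral_congr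
        intro u hu
        rw [Set.uIcc_of_le hL] at hu
        exact max_eq_right (by linarith [hu.2])
      have e2 : ∫ u in L..Real.log n, max 0 (L - u) = ∫ u in L..Real.log n, (0 : ℝ) := by
        apply intervalIntegral.integral_congr
        intro u hu
        rw [Set.uIcc_of_le hLn] at hu
        exact max_eq_left (by linarith [hu.1])
      rw [e1, e2, intervalIntegral.integral_sub (by simp) (by simp)]
      simp
      ring
    rw [intervalIntegral.integral_neg, hI] at h1
    have := (abs_le.1 h1).1
    simp only [mul_neg, sum_neg_distrib] at this
    linarith
  · intro u _ v _ huv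
    simp only
    gcongr
  · intro u hu
    rw [abs_neg, abs_of_nonneg (le_max_left _ _)]
    exact max_le hL (by linarith)

/-- The extremal constant for the linear majorant used below: with `x = L / X`, the function
`26 / (75 x) + log x - x / 3` is smallest on `(0, 1]` at `x = 2 / 5`, the asymptotic ratio of the
second moment to `X` times the first. -/
lemma neg_log_add_le {x : ℝ} (hx : 0 < x) (hx1 : x ≤ 1) :
    -Real.log x + x / 3 ≤ Real.log (5 / 2) + 2 / 15 + 26 / 75 * (1 / x - 5 / 2) := by
  set k : ℝ → ℝ := fun x => 26 / 75 / x + Real.log x - x / 3 with hk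
  have hd : ∀ x : ℝ, 0 < x → HasDerivAt k (-(26 / 75) / x ^ 2 + 1 / x - 1 / 3) x := by
    intro x hx
    have h1 := ((hasDerivAt_inv hx.ne').const_mul (26 / 75 : ℝ))
    have h2 := Real.hasDerivAt_log hx.ne'
    have h3 := (hasDerivAt_id x).div_const 3
    have := (h1.add h2).sub h3
    convert! this using 1
    field_simp
  have hk25 : k (2 / 5) ≤ k x := by
    rcases le_total x (2 / 5) with h | h
    · have : AntitoneOn k (Set.Ioc 0 (2 / 5)) := by
        apply antitoneOn_of_deriv_nonpos (convex_Ioc _ _)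
        · intro y hy; exact (hd y hy.1).continuousAt.continuousWithinAt
        · intro y hy; rw [interior_Ioc] at hy
          exact (hd y hy.1).differentiableAt.differentiableWithinAt
        · intro y hy; rw [interior_Ioc] at hy
          rw [(hd y hy.1).deriv]
          have hy0 := hy.1
          have : -(26 / 75) / y ^ 2 + 1 / y - 1 / 3 = -((y - 2 / 5) * (y - 13 / 5)) / 3 / y ^ 2 := by
            field_simp; ring
          rw [this]
          apply div_nonpos_of_nonpos_of_nonneg _ (by positivity)
          nlinarith [hy.2]
      exact this ⟨hx, h⟩ ⟨by norm_num, le_rfl⟩ h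
    · have : MonotoneOn k (Set.Icc (2 / 5) 1) := by
        apply monotoneOn_of_deriv_nonneg (convex_Icc _ _)
        · intro y hy; exact (hd y (by linarith [hy.1])).continuousAt.continuousWithinAt
        · intro y hy; rw [interior_Icc] at hy
          exact (hd y (by linarith [hy.1])).differentiableAt.differentiableWithinAt
        · intro y hy; rw [interior_Icc] at hy
          have hy0 : 0 < y := by linarith [hy.1]
          rw [(hd y hy0).deriv]
          have : -(26 / 75) / y ^ 2 + 1 / y - 1 / 3 = -((y - 2 / 5) * (y - 13 / 5)) / 3 / y ^ 2 := by
            field_simp; ring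
          rw [this]
          apply div_nonneg _ (by positivity)
          nlinarith [hy.2, hy.1]
      exact this ⟨le_rfl, by norm_num⟩ ⟨h, hx1⟩ h
  simp only [hk] at hk25
  have h1 : Real.log (2 / 5) = - Real.log (5 / 2) := by
    rw [← Real.log_inv]; norm_num
  rw [h1] at hk25
  have h2 : (26 / 75 : ℝ) / x = 26 / 75 * (1 / x) := by ring
  rw [h2] at hk25
  linarith

/-- The main prime sum: its exact main term
`L² (log (Y / L) - 1 / 2 + 2 L / (3 Y))`, `Y = 2 X`, is majorised by a combination of `L²` and
`X L`. -/
lemma exists_sum_primeWeight_min_sq_le :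
    ∃ C : ℝ, 0 < C ∧ ∀ (n : ℕ) (L X : ℝ), 1 ≤ n → Real.log n = 2 * X → 0 < X → 0 ≤ L → L ≤ X →
      ∑ k ∈ Icc 1 n with k.Prime,
          (1 / (k : ℝ)) * (1 - Real.log k / (2 * X)) * min (Real.log k) L ^ 2 ≤
        (Real.log 5 - 11 / 30) * L ^ 2 + 26 / 75 * (X * L - 5 / 2 * L ^ 2) + C * L := by
  obtain ⟨C, hC, h⟩ := exists_prime_sum_monotone
  refine ⟨2 * C, by positivity, fun n L X hn hX hX0 hL hLX => ?_⟩
  rcases hL.eq_or_lt with rfl | hL0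
  · have : ∀ k : ℕ, min (Real.log k) 0 = 0 := fun k => min_eq_right (Real.log_natCast_nonneg k)
    simp [this]
  -- the summand is not monotone in `log k`, but is the difference of two monotone functions
  set f₁ : ℝ → ℝ := fun u => min u L * (1 - min u L / (2 * X)) with hf₁
  set f₂ : ℝ → ℝ := fun u => L - L ^ 2 / max u L with hf₂
  have hb1 : ∀ v : ℝ, 0 ≤ v → v ≤ L → 0 ≤ 1 - v / (2 * X) ∧ 1 - v / (2 * X) ≤ 1 := by
    intro v hv hvL
    refine ⟨?_, by have : 0 ≤ v / (2 * X) := by positivity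
                   linarith⟩
    rw [sub_nonneg, div_le_one (by positivity)]; linarith
  have h1 := h f₁ L n hn ?_ ?_
  · have h2 := h f₂ L n hn ?_ ?_
    · have hsum : ∑ k ∈ Icc 1 n with k.Prime,
          (1 / (k : ℝ)) * (1 - Real.log k / (2 * X)) * min (Real.log k) L ^ 2 =
          ∑ k ∈ Icc 1 n, primeWeight k * f₁ (Real.log k)
            - ∑ k ∈ Icc 1 n, primeWeight k * f₂ (Real.log k) := by
        rw [sum_filter, ← sum_sub_distrib]
        refine sum_congr rfl fun k hk => ?_
        unfold primeWeight
        split_ifs with hp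
        · have hk0 : (0 : ℝ) < k := by exact_mod_cast hp.pos
          have hlk : 0 < Real.log k := Real.log_pos (by exact_mod_cast hp.one_lt)
          simp only [hf₁, hf₂]
          rcases le_total (Real.log k) L with hle | hle
          · rw [min_eq_left hle, max_eq_right hle]; field_simp; ring
          · rw [min_eq_right hle, max_eq_left hle]; field_simp; ring
        · simp
      have hc1 : Continuous f₁ := by simp only [hf₁]; fun_prop
      have hc2 : Continuous f₂ := by
        simp only [hf₂]
        refine continuous_const.sub (continuous_const.div (by fun_prop) fun u => ?_)
        exact (lt_of_lt_of_le hL0 (le_max_right _ _)).ne'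
      have hI : (∫ u in (0 : ℝ)..Real.log n, f₁ u) - (∫ u in (0 : ℝ)..Real.log n, f₂ u) =
          L ^ 2 * (-Real.log (L / X) + (L / X) / 3 + Real.log 2 - 1 / 2) := by
        rw [hX, ← intervalIntegral.integral_sub (hc1.intervalIntegrable _ _)
          (hc2.intervalIntegrable _ _)]
        have hc : Continuous fun u => f₁ u - f₂ u := hc1.sub hc2
        rw [← intervalIntegral.integral_add_adjacent_intervals (b := L)
          (hc.intervalIntegrable _ _) (hc.intervalIntegrable _ _)]
        have e1 : ∫ u in (0 : ℝ)..L, (f₁ u - f₂ u) = ∫ u in (0 : ℝ)..L, (u - u ^ 2 / (2 * X)) := by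
          apply intervalIntegral.integral_congr
          intro u hu
          rw [Set.uIcc_of_le hL] at hu
          simp only [hf₁, hf₂]
          rw [min_eq_left hu.2, max_eq_right hu.2]; field_simp; ring
        have e2 : ∫ u in L..(2 * X), (f₁ u - f₂ u) =
            ∫ u in L..(2 * X), (L ^ 2 * (1 / u) - L ^ 2 / (2 * X)) := by
          apply intervalIntegral.integral_congr
          intro u hu
          rw [Set.uIcc_of_le (by linarith)] at hu
          have : 0 < u := hL0.trans_le hu.1
          simp only [hf₁, hf₂]
          rw [min_eq_right hu.1, max_eq_left hu.1]; field_simp; ring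
        have hni : (0 : ℝ) ∉ Set.uIcc L (2 * X) := by
          rw [Set.uIcc_of_le (by linarith)]
          intro h0; linarith [h0.1]
        have hii : IntervalIntegrable (fun u : ℝ => L ^ 2 * (1 / u)) MeasureTheory.volume L (2 * X) :=
          (intervalIntegral.intervalIntegrable_one_div (fun x hx => by
            rintro rfl; exact hni hx) continuousOn_id).const_mul _
        rw [e1, e2, intervalIntegral.integral_sub (by simp) ((by fun_prop : Continuous fun u : ℝ => u ^ 2 / (2 * X)).intervalIntegrable _ _),
          intervalIntegral.integral_sub hii (by simp),
          intervalIntegral.integral_const_mul, integral_one_div hni,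
          intervalIntegral.integral_div, integral_pow, integral_id, intervalIntegral.integral_const]
        rw [Real.log_div (by positivity) hL0.ne', Real.log_mul (by norm_num) hX0.ne',
          Real.log_div hL0.ne' hX0.ne']
        simp only [smul_eq_mul]
        field_simp
        ring
      have hlin := neg_log_add_le (x := L / X) (by positivity) ((div_le_one hX0).2 hLX)
      have hlog5 : Real.log (5 / 2) = Real.log 5 - Real.log 2 :=
        Real.log_div (by norm_num) (by norm_num)
      have hmain : L ^ 2 * (-Real.log (L / X) + (L / X) / 3 + Real.log 2 - 1 / 2) ≤
          (Real.log 5 - 11 / 30) * L ^ 2 + 26 / 75 * (X * L - 5 / 2 * L ^ 2) := by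
        have e : X * L = L ^ 2 * (1 / (L / X)) := by field_simp
        rw [e]
        have h3 := mul_le_mul_of_nonneg_left hlin (sq_nonneg L)
        rw [hlog5] at h3
        linarith
      rw [hsum]
      have := (abs_le.1 h1).2
      have := (abs_le.1 h2).1
      linarith
    · intro u hu v hv huv
      simp only [hf₂]
      have : 0 < max u L := lt_of_lt_of_le hL0 (le_max_right _ _)
      gcongr
    · intro u hu
      have h3 : L ^ 2 / max u L ≤ L := by
        rw [div_le_iff₀ (lt_of_lt_of_le hL0 (le_max_right _ _))]
        nlinarith [le_max_right u L]
      have h4 : 0 ≤ L ^ 2 / max u L :=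
        div_nonneg (by positivity) (hL.trans (le_max_right _ _))
      rw [abs_le]; constructor <;> simp only [hf₂] <;> linarith
  · intro u hu v hv huv
    simp only [hf₁]
    have h3 : min u L ≤ min v L := min_le_min_right _ huv
    have h4 : 0 ≤ min u L := le_min hu hL
    have h5 : min v L ≤ L := min_le_right _ _
    generalize min u L = a at *
    generalize min v L = b at *
    rw [← sub_nonneg]
    have : b * (1 - b / (2 * X)) - a * (1 - a / (2 * X)) = (b - a) * (2 * X - (a + b)) / (2 * X) := by
      field_simp; ring
    rw [this]
    apply div_nonneg (mul_nonneg (by linarith) (by linarith)) (by positivity)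
  · intro u hu
    have h4 : 0 ≤ min u L := le_min hu hL
    have h5 : min u L ≤ L := min_le_right _ _
    have := hb1 _ h4 h5
    rw [abs_of_nonneg (mul_nonneg h4 this.1)]
    nlinarith [this.2, this.1]

/-! ### Roots of the cubic modulo `q` -/

/-- The part of `m ^ 3 - m` coprime to `6` for `m = 36 n + 6`: the product
`(m / 6) (m - 1) (m + 1)`. -/
def triple (n : ℕ) : ℕ := (6 * n + 1) * (36 * n + 5) * (36 * n + 7)

lemma triple_mod (q n : ℕ) : q ∣ triple (n % q) ↔ q ∣ triple n := by
  have h : triple (n % q) ≡ triple n [MOD q] := by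
    unfold triple
    have := Nat.mod_modEq n q
    gcongr
  exact h.dvd_iff dvd_rfl

/-- The number of roots of `triple` modulo `q`. -/
def rootCount (q : ℕ) : ℕ := #{n ∈ range q | q ∣ triple n}

lemma rootCount_mul {a b : ℕ} (h : a.Coprime b) (ha : 0 < a) (hb : 0 < b) :
    rootCount (a * b) = rootCount a * rootCount b := by
  unfold rootCount
  rw [← card_product]
  refine card_bij (fun n _ => (n % a, n % b)) ?_ ?_ ?_
  · intro n hn
    simp only [mem_filter, mem_range, mem_product] at hn ⊢
    exact ⟨⟨Nat.mod_lt _ ha, (triple_mod a n).2 ((dvd_mul_right a b).trans hn.2)⟩,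
      ⟨Nat.mod_lt _ hb, (triple_mod b n).2 ((dvd_mul_left b a).trans hn.2)⟩⟩
  · intro n hn m hm hnm
    simp only [mem_filter, mem_range, Prod.mk.injEq] at hn hm hnm
    have : n ≡ m [MOD a * b] := (Nat.modEq_and_modEq_iff_modEq_mul h).1 hnm
    exact this.eq_of_lt_of_lt hn.1 hm.1
  · rintro ⟨x, y⟩ hxy
    simp only [mem_filter, mem_range, mem_product] at hxy
    obtain ⟨⟨hx, hx2⟩, hy, hy2⟩ := hxy
    obtain ⟨k, hk1, hk2⟩ := Nat.chineseRemainder h x y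
    have e1 : k % (a * b) % a = x := by
      rw [Nat.mod_mul_right_mod]; exact Eq.trans hk1 (Nat.mod_eq_of_lt hx)
    have e2 : k % (a * b) % b = y := by
      rw [Nat.mod_mul_left_mod]; exact Eq.trans hk2 (Nat.mod_eq_of_lt hy)
    refine ⟨k % (a * b), ?_, by rw [e1, e2]⟩
    simp only [mem_filter, mem_range]
    refine ⟨Nat.mod_lt _ (by positivity), h.mul_dvd_of_dvd_of_dvd ?_ ?_⟩
    · rw [← triple_mod, e1]; exact hx2
    · rw [← triple_mod, e2]; exact hy2

lemma card_linear_roots {c q : ℕ} (b : ℕ) (h : c.Coprime q) (hq : 0 < q) :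
    #{n ∈ range q | q ∣ c * n + b} = 1 := by
  rw [card_eq_one]
  have := NeZero.mk hq.ne'
  have hu : IsUnit (c : ZMod q) := (ZMod.isUnit_iff_coprime c q).2 h
  obtain ⟨u, hu⟩ := hu
  set x : ZMod q := -(↑u⁻¹ * b) with hx
  refine ⟨x.val, ?_⟩
  ext n
  simp only [mem_filter, mem_range, mem_singleton]
  have key : q ∣ c * n + b ↔ (n : ZMod q) = x := by
    rw [← ZMod.natCast_eq_zero_iff]
    push_cast
    rw [← hu]
    constructor
    · intro h0
      have : (n : ZMod q) = ↑u⁻¹ * (u * n + b) - ↑u⁻¹ * b := by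
        rw [mul_add, ← mul_assoc, Units.inv_mul]; ring
      rw [this, h0, hx]; ring
    · intro h0
      rw [h0, hx, mul_neg, ← mul_assoc, Units.mul_inv]; ring
  rw [key]
  constructor
  · rintro ⟨h1, h2⟩
    rw [← h2, ZMod.val_natCast, Nat.mod_eq_of_lt h1]
  · rintro rfl
    exact ⟨ZMod.val_lt x, by simp⟩

/-- The three linear factors of `triple` are pairwise coprime away from `6`, and each has exactly
one root modulo `p ^ a`. -/
lemma rootCount_prime_pow {p a : ℕ} (hp : p.Prime) (hp5 : 5 ≤ p) (ha : 0 < a) :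
    rootCount (p ^ a) = 3 := by
  have hq : 0 < p ^ a := pow_pos hp.pos a
  have hc6 : Nat.Coprime 6 p := by
    have : Nat.Coprime (2 * 3) p := Nat.Coprime.mul_left
      ((Nat.coprime_primes Nat.prime_two hp).2 (by omega))
      ((Nat.coprime_primes Nat.prime_three hp).2 (by omega))
    exact this
  have hc36 : Nat.Coprime 36 p := by
    have := Nat.Coprime.mul_left hc6 hc6
    exact this
  have hd : ∀ u v : ℕ, u < v → v ≤ u + 2 → p ∣ u → p ∣ v → False := by
    intro u v h1 h2 hu hv
    have h3 := (Nat.dvd_sub hv hu)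
    have := Nat.le_of_dvd (by omega) h3
    omega
  have h12 : ∀ n, p ∣ 6 * n + 1 → ¬ p ∣ 36 * n + 5 := fun n h1 h2 =>
    hd (36 * n + 5) (6 * (6 * n + 1)) (by omega) (by omega) h2 (h1.mul_left 6)
  have h13 : ∀ n, p ∣ 6 * n + 1 → ¬ p ∣ 36 * n + 7 := fun n h1 h2 =>
    hd (6 * (6 * n + 1)) (36 * n + 7) (by omega) (by omega) (h1.mul_left 6) h2
  have h23 : ∀ n, p ∣ 36 * n + 5 → ¬ p ∣ 36 * n + 7 := fun n h1 h2 =>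
    hd (36 * n + 5) (36 * n + 7) (by omega) (by omega) h1 h2
  have hpa : ∀ {x : ℕ}, p ^ a ∣ x → p ∣ x := fun h => (dvd_pow_self p ha.ne').trans h
  have hset : (range (p ^ a)).filter (fun n => p ^ a ∣ triple n) =
      ((range (p ^ a)).filter (fun n => p ^ a ∣ 6 * n + 1) ∪
        (range (p ^ a)).filter (fun n => p ^ a ∣ 36 * n + 5)) ∪
        (range (p ^ a)).filter (fun n => p ^ a ∣ 36 * n + 7) := by
    ext n
    simp only [mem_filter, mem_union, ← and_or_left]
    refine and_congr_right fun _ => ?_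
    constructor
    · intro h
      have hp' : p ∣ triple n := hpa h
      have cop : ∀ x, ¬ p ∣ x → Nat.Coprime (p ^ a) x := fun x hx =>
        (hp.coprime_pow_of_not_dvd hx).symm
      unfold triple at h hp'
      rcases (hp.dvd_mul).1 hp' with h' | h'
      · rcases (hp.dvd_mul).1 h' with h' | h'
        · left; left
          exact (cop _ (h12 n h')).dvd_of_dvd_mul_right ((cop _ (h13 n h')).dvd_of_dvd_mul_right h)
        · left; right
          exact (cop _ (fun h1 => h12 n h1 h')).dvd_of_dvd_mul_left
            ((cop _ (h23 n h')).dvd_of_dvd_mul_right h)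
      · right
        refine (cop _ fun h1 => ?_).dvd_of_dvd_mul_left h
        rcases (hp.dvd_mul).1 h1 with h1 | h1
        · exact h13 n h1 h'
        · exact h23 n h1 h'
    · unfold triple
      rintro ((h | h) | h)
      · exact (h.mul_right _).mul_right _
      · exact (h.mul_left _).mul_right _
      · exact h.mul_left _
  unfold rootCount
  rw [hset, card_union_of_disjoint, card_union_of_disjoint,
    card_linear_roots _ (hc6.pow_right a) hq, card_linear_roots _ (hc36.pow_right a) hq,
    card_linear_roots _ (hc36.pow_right a) hq]
  · rw [disjoint_left]
    intro n h1 h2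
    exact h12 n (hpa (mem_filter.1 h1).2) (hpa (mem_filter.1 h2).2)
  · rw [disjoint_left]
    intro n h1 h2
    have h2' := hpa (mem_filter.1 h2).2
    rcases mem_union.1 h1 with h1 | h1
    · exact h13 n (hpa (mem_filter.1 h1).2) h2'
    · exact h23 n (hpa (mem_filter.1 h1).2) h2'

lemma five_le_of_dvd {p d : ℕ} (hp : p.Prime) (hd : d.Coprime 6) (h : p ∣ d) : 5 ≤ p := by
  have hc : p.Coprime 6 := hd.coprime_dvd_left h
  by_contra hlt
  have h2 := hp.two_le
  have : p = 2 ∨ p = 3 ∨ p = 4 := by omega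
  rcases this with rfl | rfl | rfl
  · revert hc; decide
  · revert hc; decide
  · revert hp; decide

lemma rootCount_eq (q : ℕ) (h0 : 0 < q) (h6 : q.Coprime 6) :
    rootCount q = 3 ^ q.primeFactors.card := by
  induction q using Nat.recOnPosPrimePosCoprime with
  | prime_pow p n hp hn =>
    rw [rootCount_prime_pow hp (five_le_of_dvd hp h6 (dvd_pow_self p hn.ne')) hn,
      Nat.primeFactors_prime_pow hn.ne' hp]
    simp
  | zero => omega
  | one => simp [rootCount]
  | coprime a b ha hb hab iha ihb =>
    rw [rootCount_mul hab (by omega) (by omega), iha (by omega) (h6.coprime_dvd_left (dvd_mul_right a b)),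
      ihb (by omega) (h6.coprime_dvd_left (dvd_mul_left b a)), hab.primeFactors_mul,
      card_union_of_disjoint hab.disjoint_primeFactors, pow_add]

lemma card_modEq_approx (N q v : ℕ) (hq : 0 < q) :
    |(#{n ∈ Ico N (2 * N) | n ≡ v [MOD q]} : ℝ) - N / q| ≤ 1 := by
  have h := Nat.Ico_filter_modEq_card N (2 * N) hq v
  have hq' : (0 : ℚ) < q := by exact_mod_cast hq
  have key : |(#{n ∈ Ico N (2 * N) | n ≡ v [MOD q]} : ℚ) - N / q| ≤ 1 := by
    have hcast : (#{n ∈ Ico N (2 * N) | n ≡ v [MOD q]} : ℚ) =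
        ((max (⌈(((2 * N : ℕ) : ℚ) - v) / (q : ℚ)⌉ - ⌈((N : ℚ) - v) / (q : ℚ)⌉) 0 : ℤ) : ℚ) := by
      rw [← h]; simp
    rw [hcast]
    have e : (((2 * N : ℕ) : ℚ) - v) / (q : ℚ) = ((N : ℚ) - v) / q + N / q := by
      push_cast; field_simp; ring
    rw [e]
    set x := ((N : ℚ) - v) / q
    set y := (N : ℚ) / q
    have hy : 0 ≤ y := by positivity
    have h1 := Int.le_ceil (x + y)
    have h2 := Int.ceil_lt_add_one (x + y)
    have h3 := Int.le_ceil x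
    have h4 := Int.ceil_lt_add_one x
    have hm : ⌈x⌉ ≤ ⌈x + y⌉ := Int.ceil_le_ceil (by linarith)
    rw [max_eq_left (by omega)]
    push_cast
    rw [abs_le]; constructor <;> linarith
  have := (Rat.cast_le (K := ℝ)).2 key
  simpa using this

lemma card_dvd_triple_approx (N q : ℕ) (hq : 0 < q) :
    |(#{n ∈ Ico N (2 * N) | q ∣ triple n} : ℝ) - N * (rootCount q / q)| ≤ rootCount q := by
  have h : (#{n ∈ Ico N (2 * N) | q ∣ triple n} : ℝ) =
      ∑ v ∈ range q with q ∣ triple v, (#{n ∈ Ico N (2 * N) | n ≡ v [MOD q]} : ℝ) := by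
    have := card_eq_sum_card_fiberwise (f := fun n => n % q)
      (s := (Ico N (2 * N)).filter (fun n => q ∣ triple n))
      (t := (range q).filter (fun n => q ∣ triple n)) (by
        intro n hn
        simp only [coe_filter, Set.mem_ofPred_eq, mem_range] at hn ⊢
        exact ⟨Nat.mod_lt _ hq, (triple_mod q n).2 hn.2⟩)
    rw [this]
    push_cast
    refine sum_congr rfl fun v hv => ?_
    congr 2
    ext n
    simp only [mem_filter, mem_range] at hv ⊢
    have hv' : v % q = v := Nat.mod_eq_of_lt hv.1
    constructor
    · rintro ⟨⟨h1, h2⟩, h3⟩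
      exact ⟨h1, by rw [Nat.ModEq, h3, hv']⟩
    · rintro ⟨h1, h2⟩
      rw [Nat.ModEq, hv'] at h2
      exact ⟨⟨h1, (triple_mod q n).1 (by rw [h2]; exact hv.2)⟩, h2⟩
  have h2 : (N : ℝ) * (rootCount q / q) = ∑ v ∈ range q with q ∣ triple v, (N / q : ℝ) := by
    rw [sum_const, nsmul_eq_mul]; unfold rootCount; ring
  rw [h, h2, ← sum_sub_distrib]
  refine (abs_sum_le_sum_abs _ _).trans ?_
  refine (sum_le_sum fun v _ => card_modEq_approx N q v hq).trans ?_
  simp [rootCount]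

/-! ### Selberg weights and their quadratic form -/

/-- The local density of `triple`: for `q` coprime to `6`, the proportion of `n` with
`q ∣ triple n`. -/
noncomputable def dens (q : ℕ) : ℝ := 3 ^ q.primeFactors.card / q

/-- Selberg's function `h`, with `h p = dens p / (1 - dens p)` at primes. -/
noncomputable def hfun (r : ℕ) : ℝ := ∏ p ∈ r.primeFactors, 3 / ((p : ℝ) - 3)

/-- The support of the sieve weights: squarefree `d ≤ R` coprime to `6`. -/
def supp (R : ℕ) : Finset ℕ := {d ∈ Icc 1 R | Squarefree d ∧ d.Coprime 6}

lemma mem_supp {R d : ℕ} : d ∈ supp R ↔ (1 ≤ d ∧ d ≤ R) ∧ Squarefree d ∧ d.Coprime 6 := by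
  simp [supp]

lemma mem_supp_of_dvd {R d e : ℕ} (hd : d ∈ supp R) (h : e ∣ d) : e ∈ supp R := by
  rw [mem_supp] at hd ⊢
  have hpos : 0 < e := Nat.pos_of_dvd_of_pos h hd.1.1
  exact ⟨⟨hpos, (Nat.le_of_dvd hd.1.1 h).trans hd.1.2⟩, hd.2.1.squarefree_of_dvd h,
    hd.2.2.coprime_dvd_left h⟩

lemma five_le_of_mem {d p : ℕ} (h6 : d.Coprime 6) (hp : p ∈ d.primeFactors) : (5 : ℝ) ≤ p := by
  exact_mod_cast five_le_of_dvd (Nat.prime_of_mem_primeFactors hp) h6 (Nat.dvd_of_mem_primeFactors hp)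

lemma dens_pos {d : ℕ} (h : 0 < d) : 0 < dens d := by
  unfold dens; positivity

lemma hfun_pos {d : ℕ} (h6 : d.Coprime 6) : 0 < hfun d := by
  unfold hfun
  refine prod_pos fun p hp => ?_
  have := five_le_of_mem h6 hp
  apply div_pos (by norm_num); linarith

lemma dens_mul {a b : ℕ} (h : a.Coprime b) : dens (a * b) = dens a * dens b := by
  unfold dens
  rw [h.primeFactors_mul, card_union_of_disjoint h.disjoint_primeFactors, pow_add]
  push_cast
  rw [mul_div_mul_comm]

lemma hfun_mul {a b : ℕ} (h : a.Coprime b) : hfun (a * b) = hfun a * hfun b := by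
  unfold hfun
  rw [h.primeFactors_mul, prod_union h.disjoint_primeFactors]

lemma hfun_prime {p : ℕ} (hp : p.Prime) : hfun p = 3 / ((p : ℝ) - 3) := by
  simp [hfun, hp.primeFactors]

lemma dens_eq_prod {d : ℕ} (hd : Squarefree d) :
    dens d = ∏ p ∈ d.primeFactors, 3 / (p : ℝ) := by
  unfold dens
  rw [prod_div_distrib, prod_const]
  congr 1
  conv_lhs => rw [← Nat.prod_primeFactors_of_squarefree hd]
  push_cast; rfl

lemma prod_one_add_eq_sum_divisors (f : ℕ → ℝ) {n : ℕ} (hn : Squarefree n) :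
    ∏ p ∈ n.primeFactors, (1 + f p) = ∑ d ∈ n.divisors, ∏ p ∈ d.primeFactors, f p := by
  have := (ArithmeticFunction.IsMultiplicative.prodPrimeFactors
    f).prodPrimeFactors_one_add_of_squarefree hn
  rw [sum_congr rfl (g := fun d => ArithmeticFunction.prodPrimeFactors f d), ← this]
  · refine prod_congr rfl fun p hp => ?_
    have hp' := Nat.prime_of_mem_primeFactors hp
    rw [ArithmeticFunction.prodPrimeFactors_apply hp'.ne_zero, hp'.primeFactors, prod_singleton]
  · intro d hd
    rw [ArithmeticFunction.prodPrimeFactors_apply (Nat.pos_of_mem_divisors hd).ne']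

lemma inv_dens_eq_sum {d : ℕ} (hd : Squarefree d) :
    (dens d)⁻¹ = ∑ r ∈ d.divisors, (hfun r)⁻¹ := by
  have := prod_one_add_eq_sum_divisors (fun p => (3 / ((p : ℝ) - 3))⁻¹) hd
  simp only [prod_inv_distrib] at this
  unfold hfun
  rw [← this, dens_eq_prod hd, ← prod_inv_distrib]
  refine prod_congr rfl fun p hp => ?_
  rw [inv_div, inv_div]
  ring

lemma hfun_div_dens_eq_sum {d : ℕ} (hd : Squarefree d) (h6 : d.Coprime 6) :
    hfun d / dens d = ∑ r ∈ d.divisors, hfun r := by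
  have := prod_one_add_eq_sum_divisors (fun p => 3 / ((p : ℝ) - 3)) hd
  unfold hfun
  rw [← this, dens_eq_prod hd, ← prod_div_distrib]
  refine prod_congr rfl fun p hp => ?_
  have := five_le_of_mem h6 hp
  have : (p : ℝ) - 3 ≠ 0 := by linarith
  field_simp
  ring

lemma dens_le_hfun {d : ℕ} (hd : Squarefree d) (h6 : d.Coprime 6) : dens d ≤ hfun d := by
  rw [dens_eq_prod hd]
  unfold hfun
  refine prod_le_prod (fun p _ => by positivity) fun p hp => ?_
  have := five_le_of_mem h6 hp
  apply div_le_div_of_nonneg_left (by norm_num) (by linarith) (by linarith)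

lemma primeFactors_lcm {d e : ℕ} (hd : d ≠ 0) (he : e ≠ 0) :
    (d.lcm e).primeFactors = d.primeFactors ∪ e.primeFactors := by
  ext p
  simp only [mem_union, Nat.mem_primeFactors]
  constructor
  · rintro ⟨hp, h, -⟩
    rcases (Nat.Prime.dvd_mul hp).1 (h.trans (Nat.lcm_dvd_mul d e)) with h | h
    · exact Or.inl ⟨hp, h, hd⟩
    · exact Or.inr ⟨hp, h, he⟩
  · rintro (⟨hp, h, -⟩ | ⟨hp, h, -⟩)
    · exact ⟨hp, h.trans (Nat.dvd_lcm_left d e), Nat.lcm_ne_zero hd he⟩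
    · exact ⟨hp, h.trans (Nat.dvd_lcm_right d e), Nat.lcm_ne_zero hd he⟩

lemma dens_lcm {d e : ℕ} (hd : Squarefree d) (he : Squarefree e) :
    dens (d.lcm e) = dens d * dens e * (dens (d.gcd e))⁻¹ := by
  have hd0 := hd.ne_zero
  have he0 := he.ne_zero
  have h : dens (d.lcm e) * dens (d.gcd e) = dens d * dens e := by
    unfold dens
    rw [primeFactors_lcm hd0 he0, Nat.primeFactors_gcd hd0 he0, div_mul_div_comm,
      div_mul_div_comm, ← pow_add, ← pow_add, card_union_add_card_inter]
    congr 1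
    rw [mul_comm]
    exact_mod_cast Nat.gcd_mul_lcm d e
  have : dens (d.gcd e) ≠ 0 := (dens_pos (Nat.gcd_pos_of_pos_left _ (Nat.pos_of_ne_zero hd0))).ne'
  field_simp
  exact h

/-- Möbius cancellation on the interval between `r` and `k` in the divisor lattice. -/
lemma sum_moebius_between {R k r : ℕ} (hk : k ∈ supp R) :
    ∑ d ∈ supp R with r ∣ d ∧ d ∣ k, (ArithmeticFunction.moebius d : ℝ) =
      if k = r then (ArithmeticFunction.moebius r : ℝ) else 0 := by
  by_cases hr : r ∣ k
  · obtain ⟨m, rfl⟩ := hr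
    have hk' := mem_supp.1 hk
    have hcop : r.Coprime m := Nat.coprime_of_squarefree_mul hk'.2.1
    have hr0 : r ≠ 0 := by rintro rfl; simp at hk'
    have hm0 : m ≠ 0 := by rintro rfl; simp at hk'
    have : ∑ d ∈ supp R with r ∣ d ∧ d ∣ r * m, (ArithmeticFunction.moebius d : ℝ) =
        ∑ j ∈ m.divisors, (ArithmeticFunction.moebius (r * j) : ℝ) := by
      symm
      refine sum_bij (fun j _ => r * j) ?_ ?_ ?_ ?_
      · intro j hj
        have hj' := Nat.dvd_of_mem_divisors hj
        rw [mem_filter]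
        exact ⟨mem_supp_of_dvd hk (mul_dvd_mul_left r hj'), dvd_mul_right _ _,
          mul_dvd_mul_left r hj'⟩
      · intro a _ b _ h
        exact Nat.eq_of_mul_eq_mul_left (Nat.pos_of_ne_zero hr0) h
      · intro d hd
        rw [mem_filter] at hd
        obtain ⟨-, ⟨j, rfl⟩, h2⟩ := hd
        exact ⟨j, Nat.mem_divisors.2 ⟨Nat.dvd_of_mul_dvd_mul_left (Nat.pos_of_ne_zero hr0) h2, hm0⟩,
          rfl⟩
      · intro j _; rfl
    rw [this]
    have h2 : ∀ j ∈ m.divisors, (ArithmeticFunction.moebius (r * j) : ℝ) =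
        (ArithmeticFunction.moebius r : ℝ) * (ArithmeticFunction.moebius j : ℝ) := by
      intro j hj
      rw [ArithmeticFunction.isMultiplicative_moebius.map_mul_of_coprime
        (hcop.coprime_dvd_right (Nat.dvd_of_mem_divisors hj))]
      push_cast; rfl
    rw [sum_congr rfl h2, ← mul_sum]
    have h3 : ∑ j ∈ m.divisors, (ArithmeticFunction.moebius j : ℝ) = if m = 1 then 1 else 0 := by
      have := congrArg (fun f : ArithmeticFunction ℤ => f m)
        ArithmeticFunction.moebius_mul_coe_zeta
      simp only [ArithmeticFunction.coe_mul_zeta_apply, ArithmeticFunction.one_apply] at this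
      have h4 := congrArg (Int.cast : ℤ → ℝ) this
      push_cast at h4
      exact h4
    rw [h3]
    by_cases hm1 : m = 1
    · simp [hm1]
    · have : r * m ≠ r := by
        intro h
        exact hm1 (Nat.eq_of_mul_eq_mul_left (Nat.pos_of_ne_zero hr0) (by simpa using h))
      simp [hm1, this]
  · rw [if_neg (by rintro rfl; exact hr dvd_rfl)]
    rw [filter_eq_empty_iff.2, sum_empty]
    intro d _ h
    exact hr (h.1.trans h.2)

/-- The logarithmic weight `log⁺ (R / r)`. -/
noncomputable def ell (R r : ℕ) : ℝ := max 0 (Real.log R - Real.log r)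

/-- The Selberg weights whose diagonalising variables are `ell R r`. -/
noncomputable def lam (R d : ℕ) : ℝ :=
  (ArithmeticFunction.moebius d : ℝ) * (dens d)⁻¹ * ∑ k ∈ supp R with d ∣ k, hfun k * ell R k

/-- The nonnegative sieve weight of `n`. -/
noncomputable def wt (R n : ℕ) : ℝ := (∑ d ∈ supp R with d ∣ triple n, lam R d) ^ 2

/-- The moments `∑ h(r) log⁺(R/r)^j` over the support. -/
noncomputable def mom (R j : ℕ) : ℝ := ∑ r ∈ supp R, hfun r * ell R r ^ j

lemma ell_nonneg (R r : ℕ) : 0 ≤ ell R r := le_max_left _ _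

lemma ell_le_log {R r : ℕ} : ell R r ≤ Real.log R :=
  max_le (Real.log_natCast_nonneg R) (by linarith [Real.log_natCast_nonneg r])

lemma ell_eq {R r : ℕ} (hr : r ∈ supp R) : ell R r = Real.log R - Real.log r := by
  have h := (mem_supp.1 hr).1
  refine max_eq_right (sub_nonneg.2 (Real.log_le_log ?_ ?_))
  · exact_mod_cast h.1
  · exact_mod_cast h.2

lemma ell_sub_ell_mul {R r p : ℕ} (hr : r ∈ supp R) (hp : 0 < p) :
    ell R r - ell R (r * p) = min (Real.log p) (ell R r) := by
  have h := (mem_supp.1 hr).1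
  have hr0 : (r : ℝ) ≠ 0 := by have := h.1; positivity
  rw [ell_eq hr]
  unfold ell
  push_cast
  rw [Real.log_mul hr0 (by positivity)]
  rcases le_total 0 (Real.log R - (Real.log r + Real.log p)) with h' | h'
  · rw [max_eq_right h', min_eq_left (by linarith)]; ring
  · rw [max_eq_left h', min_eq_right (by linarith)]; ring

lemma hfun_nonneg_of_mem {R r : ℕ} (hr : r ∈ supp R) : 0 ≤ hfun r :=
  (hfun_pos (mem_supp.1 hr).2.2).le

/-- Diagonalisation of the quadratic form, for a map `φ` on the support such that the divisors of
`φ d` are the divisors of `d` satisfying `P`. -/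
lemma quad_form_diag (R : ℕ) (φ : ℕ → ℕ) (P : ℕ → Prop) [DecidablePred P] (l : ℕ → ℝ)
    (hφ : ∀ d ∈ supp R, ∀ r, r ∣ φ d ↔ r ∣ d ∧ P r) :
    ∑ d ∈ supp R, ∑ e ∈ supp R, l d * l e * dens ((φ d).lcm (φ e)) =
      ∑ r ∈ supp R with P r, (hfun r)⁻¹ * (∑ d ∈ supp R with r ∣ d, l d * dens (φ d)) ^ 2 := by
  have hmem : ∀ d ∈ supp R, φ d ∈ supp R := fun d hd =>
    mem_supp_of_dvd hd ((hφ d hd (φ d)).1 dvd_rfl).1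
  have h1 : ∀ d ∈ supp R, ∀ e ∈ supp R, l d * l e * dens ((φ d).lcm (φ e)) =
      ∑ r ∈ supp R with P r, (hfun r)⁻¹ *
        ((if r ∣ d then l d * dens (φ d) else 0) * (if r ∣ e then l e * dens (φ e) else 0)) := by
    intro d hd e he
    have hd' := mem_supp.1 (hmem d hd)
    have he' := mem_supp.1 (hmem e he)
    have hg := Nat.gcd_dvd_left (φ d) (φ e)
    rw [dens_lcm hd'.2.1 he'.2.1, inv_dens_eq_sum (hd'.2.1.squarefree_of_dvd hg)]
    have hset : ((φ d).gcd (φ e)).divisors = {r ∈ {r ∈ supp R | P r} | r ∣ d ∧ r ∣ e} := by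
      ext r
      simp only [Nat.mem_divisors, mem_filter, Nat.dvd_gcd_iff, hφ d hd, hφ e he]
      constructor
      · rintro ⟨⟨⟨h1, h2⟩, h3, -⟩, -⟩
        exact ⟨⟨mem_supp_of_dvd hd h1, h2⟩, h1, h3⟩
      · rintro ⟨⟨-, h2⟩, h1, h3⟩
        exact ⟨⟨⟨h1, h2⟩, h3, h2⟩, Nat.gcd_ne_zero_left (by have := hd'.1.1; omega)⟩
    rw [hset, mul_sum, mul_sum, sum_filter]
    refine sum_congr rfl fun r _ => ?_
    by_cases hrd : r ∣ d <;> by_cases hre : r ∣ e <;> simp [hrd, hre]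
    ring
  rw [sum_congr rfl fun d hd => sum_congr rfl fun e he => h1 d hd e he]
  rw [sum_congr rfl fun d _ => sum_comm, sum_comm]
  refine sum_congr rfl fun r _ => ?_
  rw [sum_filter, sq, sum_mul_sum, mul_sum]
  refine sum_congr rfl fun d _ => ?_
  rw [mul_sum]

/-- The diagonalising variables of `lam` are `μ(r) h(r) ℓ(r)`, by Möbius inversion. -/
lemma inner_sum_one (R r : ℕ) (hr : r ∈ supp R) :
    ∑ d ∈ supp R with r ∣ d, lam R d * dens d =
      (ArithmeticFunction.moebius r : ℝ) * hfun r * ell R r := by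
  have h1 : ∀ d ∈ supp R, lam R d * dens d =
      ∑ k ∈ supp R, if d ∣ k then hfun k * ell R k * ArithmeticFunction.moebius d else 0 := by
    intro d hd
    have : dens d ≠ 0 := (dens_pos (mem_supp.1 hd).1.1).ne'
    unfold lam
    rw [← sum_filter, ← sum_mul]
    field_simp
  rw [sum_congr rfl fun d hd => h1 d (mem_filter.1 hd).1, sum_comm]
  have h2 : ∀ k ∈ supp R, ∑ d ∈ supp R with r ∣ d,
      (if d ∣ k then hfun k * ell R k * (ArithmeticFunction.moebius d : ℝ) else 0) =
      if k = r then hfun r * ell R r * ArithmeticFunction.moebius r else 0 := by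
    intro k hk
    rw [← sum_filter, filter_filter, ← mul_sum, sum_moebius_between hk]
    split_ifs with h
    · rw [h]
    · simp
  rw [sum_congr rfl h2, sum_ite_eq' _ r, if_pos hr]
  ring

/-- The prime-to-`p` part of a squarefree number. -/
def strip (p d : ℕ) : ℕ := if p ∣ d then d / p else d

lemma dvd_strip_iff {R p d r : ℕ} (hp : p.Prime) (hd : d ∈ supp R) :
    r ∣ strip p d ↔ r ∣ d ∧ ¬ p ∣ r := by
  have hd' := mem_supp.1 hd
  unfold strip
  split_ifs with h
  · obtain ⟨m, rfl⟩ := h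
    have hcop : p.Coprime m := Nat.coprime_of_squarefree_mul hd'.2.1
    rw [Nat.mul_div_cancel_left _ hp.pos]
    constructor
    · intro h
      refine ⟨h.mul_left p, fun h' => ?_⟩
      exact (hp.coprime_iff_not_dvd.1 hcop) (h'.trans h)
    · rintro ⟨h1, h2⟩
      exact ((hp.coprime_iff_not_dvd.2 h2).symm).dvd_of_dvd_mul_left h1
  · constructor
    · intro h'
      exact ⟨h', fun h2 => h (h2.trans h')⟩
    · exact fun h => h.1

lemma dens_prime {p : ℕ} (hp : p.Prime) : dens p = 3 / p := by
  simp [dens, hp.primeFactors]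

lemma dens_strip {R p d : ℕ} (hp : p.Prime) (hd : d ∈ supp R) :
    dens (strip p d) = dens d * (1 + if p ∣ d then ((p : ℝ) / 3 - 1) else 0) := by
  have hd' := mem_supp.1 hd
  unfold strip
  split_ifs with h
  · obtain ⟨m, rfl⟩ := h
    have hcop : p.Coprime m := Nat.coprime_of_squarefree_mul hd'.2.1
    have : (p : ℝ) ≠ 0 := by exact_mod_cast hp.ne_zero
    rw [Nat.mul_div_cancel_left _ hp.pos, dens_mul hcop, dens_prime hp]
    field_simp; ring
  · simp

/-- Under divisibility by `p`, the variable `ℓ(r)` is replaced by `ℓ(r) - ℓ(r p)`. -/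
lemma inner_sum_prime {R p r : ℕ} (hp : p.Prime) (hp5 : 5 ≤ p) (hr : r ∈ supp R) (hpr : ¬ p ∣ r) :
    ∑ d ∈ supp R with r ∣ d, lam R d * dens (strip p d) =
      (ArithmeticFunction.moebius r : ℝ) * hfun r * (ell R r - ell R (r * p)) := by
  have hcop : r.Coprime p := (hp.coprime_iff_not_dvd.2 hpr).symm
  have hr' := mem_supp.1 hr
  have h1 : ∀ d ∈ supp R, lam R d * dens (strip p d) =
      lam R d * dens d + if p ∣ d then ((p : ℝ) / 3 - 1) * (lam R d * dens d) else 0 := by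
    intro d hd
    rw [dens_strip hp hd]
    split_ifs <;> ring
  rw [sum_congr rfl fun d hd => h1 d (mem_filter.1 hd).1, sum_add_distrib, inner_sum_one R r hr,
    ← sum_filter, filter_filter, ← mul_sum]
  have hset : {d ∈ supp R | r ∣ d ∧ p ∣ d} = {d ∈ supp R | r * p ∣ d} := by
    refine filter_congr fun d _ => ?_
    exact ⟨fun h => hcop.mul_dvd_of_dvd_of_dvd h.1 h.2,
      fun h => ⟨(dvd_mul_right r p).trans h, (dvd_mul_left p r).trans h⟩⟩
  rw [hset]
  have hp3 : (p : ℝ) - 3 ≠ 0 := by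
    have : (5 : ℝ) ≤ p := by exact_mod_cast hp5
    linarith
  by_cases hrp : r * p ∈ supp R
  · rw [inner_sum_one R (r * p) hrp, hfun_mul hcop, hfun_prime hp,
      ArithmeticFunction.isMultiplicative_moebius.map_mul_of_coprime hcop,
      ArithmeticFunction.moebius_apply_prime hp]
    push_cast
    field_simp
    ring
  · have hlarge : R < r * p := by
      by_contra hle
      apply hrp
      rw [mem_supp]
      refine ⟨⟨Nat.mul_pos hr'.1.1 hp.pos, by omega⟩, ?_, ?_⟩
      · exact (Nat.squarefree_mul hcop).2 ⟨hr'.2.1, hp.prime.squarefree⟩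
      · refine Nat.Coprime.mul_left hr'.2.2 ?_
        have : Nat.Coprime p (2 * 3) := Nat.Coprime.mul_right
          ((Nat.coprime_primes hp Nat.prime_two).2 (by omega))
          ((Nat.coprime_primes hp Nat.prime_three).2 (by omega))
        exact this
    have hempty : {d ∈ supp R | r * p ∣ d} = ∅ := by
      rw [filter_eq_empty_iff]
      intro d hd h
      have h2 := (mem_supp.1 hd).1
      have := Nat.le_of_dvd h2.1 h
      omega
    have hell : ell R (r * p) = 0 := by
      refine max_eq_left (sub_nonpos.2 ?_)
      rcases Nat.eq_zero_or_pos R with rfl | hR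
      · simpa using Real.log_natCast_nonneg (r * p)
      · exact Real.log_le_log (by exact_mod_cast hR) (by exact_mod_cast hlarge.le)
    rw [hempty, hell]
    simp

lemma moebius_sq_of_mem {R r : ℕ} (hr : r ∈ supp R) :
    (ArithmeticFunction.moebius r : ℝ) ^ 2 = 1 := by
  have := ArithmeticFunction.moebius_sq_eq_one_of_squarefree (mem_supp.1 hr).2.1
  exact_mod_cast this

lemma quad_form_one (R : ℕ) :
    ∑ d ∈ supp R, ∑ e ∈ supp R, lam R d * lam R e * dens (d.lcm e) = mom R 2 := by
  have := quad_form_diag R id (fun _ => True) (lam R) (by simp)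
  simp only [id] at this
  rw [this, filter_true]
  unfold mom
  refine sum_congr rfl fun r hr => ?_
  have h0 : hfun r ≠ 0 := (hfun_pos (mem_supp.1 hr).2.2).ne'
  rw [inner_sum_one R r hr, mul_pow, mul_pow, moebius_sq_of_mem hr]
  field_simp

lemma quad_form_prime {R p : ℕ} (hp : p.Prime) (hp5 : 5 ≤ p) :
    ∑ d ∈ supp R, ∑ e ∈ supp R, lam R d * lam R e * dens ((strip p d).lcm (strip p e)) ≤
      ∑ r ∈ supp R, hfun r * min (Real.log p) (ell R r) ^ 2 := by
  rw [quad_form_diag R (strip p) (fun r => ¬ p ∣ r) (lam R) (fun d hd r => dvd_strip_iff hp hd)]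
  refine le_trans (le_of_eq ?_) (sum_le_sum_of_subset_of_nonneg (filter_subset (fun r => ¬ p ∣ r) _)
    fun r hr _ => mul_nonneg (hfun_nonneg_of_mem hr) (sq_nonneg _))
  refine sum_congr rfl fun r hr => ?_
  rw [mem_filter] at hr
  have h0 : hfun r ≠ 0 := (hfun_pos (mem_supp.1 hr.1).2.2).ne'
  rw [inner_sum_prime hp hp5 hr.1 hr.2, mul_pow, mul_pow, moebius_sq_of_mem hr.1,
    ell_sub_ell_mul hr.1 hp.pos]
  field_simp

/-! ### Weighted counts, error terms and moments -/

/-- The total weight of those `n` in `[N, 2N)` for which `q` divides `triple n`. -/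
noncomputable def wsum (R N q : ℕ) : ℝ := ∑ n ∈ Ico N (2 * N) with q ∣ triple n, wt R n

/-- The bound for the accumulated rounding errors in the sieve identity. -/
noncomputable def err (R : ℕ) : ℝ := (∑ d ∈ supp R, |lam R d| * 3 ^ d.primeFactors.card) ^ 2

lemma wsum_eq (R N q : ℕ) : wsum R N q = ∑ d ∈ supp R, ∑ e ∈ supp R, lam R d * lam R e *
    (#{n ∈ Ico N (2 * N) | q.lcm (d.lcm e) ∣ triple n} : ℝ) := by
  have h : ∀ n, wt R n = ∑ d ∈ supp R, ∑ e ∈ supp R,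
      if d ∣ triple n ∧ e ∣ triple n then lam R d * lam R e else 0 := by
    intro n
    unfold wt
    rw [sum_filter, sq, sum_mul_sum]
    refine sum_congr rfl fun d _ => sum_congr rfl fun e _ => ?_
    by_cases h1 : d ∣ triple n <;> by_cases h2 : e ∣ triple n <;> simp [h1, h2]
  unfold wsum
  rw [sum_congr rfl fun n _ => h n, sum_comm]
  refine sum_congr rfl fun d _ => ?_
  rw [sum_comm]
  refine sum_congr rfl fun e _ => ?_
  rw [← sum_filter, filter_filter, sum_const, nsmul_eq_mul, mul_comm]
  congr 3
  refine filter_congr fun n _ => ?_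
  rw [Nat.lcm_dvd_iff, Nat.lcm_dvd_iff]

/-- Expanding the square in the weights and counting each congruence class by its density. -/
lemma abs_wsum_sub_le {R N q : ℕ} (hq : 0 < q) (h6 : q.Coprime 6) :
    |wsum R N q - N * ∑ d ∈ supp R, ∑ e ∈ supp R,
      lam R d * lam R e * dens (q.lcm (d.lcm e))| ≤ 3 ^ q.primeFactors.card * err R := by
  rw [wsum_eq, mul_sum, ← sum_sub_distrib]
  unfold err
  rw [sq, sum_mul_sum, mul_sum]
  refine (abs_sum_le_sum_abs _ _).trans (sum_le_sum fun d hd => ?_)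
  rw [mul_sum, ← sum_sub_distrib, mul_sum]
  refine (abs_sum_le_sum_abs _ _).trans (sum_le_sum fun e he => ?_)
  have hd' := mem_supp.1 hd
  have he' := mem_supp.1 he
  have hd0 : d ≠ 0 := by have := hd'.1.1; omega
  have he0 : e ≠ 0 := by have := he'.1.1; omega
  have hl0 : d.lcm e ≠ 0 := Nat.lcm_ne_zero hd0 he0
  have hm0 : q.lcm (d.lcm e) ≠ 0 := Nat.lcm_ne_zero hq.ne' hl0
  have hl6 : (d.lcm e).Coprime 6 :=
    (Nat.Coprime.mul_left hd'.2.2 he'.2.2).coprime_dvd_left (Nat.lcm_dvd_mul d e)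
  have hm6 : (q.lcm (d.lcm e)).Coprime 6 :=
    (Nat.Coprime.mul_left h6 hl6).coprime_dvd_left (Nat.lcm_dvd_mul q _)
  have happ := card_dvd_triple_approx N (q.lcm (d.lcm e)) (Nat.pos_of_ne_zero hm0)
  rw [rootCount_eq _ (Nat.pos_of_ne_zero hm0) hm6] at happ
  push_cast at happ
  have hcard : (3 : ℝ) ^ (q.lcm (d.lcm e)).primeFactors.card ≤
      3 ^ q.primeFactors.card * (3 ^ d.primeFactors.card * 3 ^ e.primeFactors.card) := by
    rw [← pow_add, ← pow_add]
    refine pow_le_pow_right₀ (by norm_num) ?_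
    rw [primeFactors_lcm hq.ne' hl0, primeFactors_lcm hd0 he0]
    refine (card_union_le _ _).trans ?_
    have := card_union_le d.primeFactors e.primeFactors
    omega
  have hEq : lam R d * lam R e * (#{n ∈ Ico N (2 * N) | q.lcm (d.lcm e) ∣ triple n} : ℝ) -
      N * (lam R d * lam R e * dens (q.lcm (d.lcm e))) = lam R d * lam R e *
      ((#{n ∈ Ico N (2 * N) | q.lcm (d.lcm e) ∣ triple n} : ℝ) -
        N * dens (q.lcm (d.lcm e))) := by ring
  rw [hEq, abs_mul, abs_mul]
  calc |lam R d| * |lam R e| * _ ≤ |lam R d| * |lam R e| *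
      (3 ^ q.primeFactors.card * (3 ^ d.primeFactors.card * 3 ^ e.primeFactors.card)) :=
        mul_le_mul_of_nonneg_left (happ.trans hcard) (by positivity)
    _ = _ := by ring

lemma wsum_one_ge (R N : ℕ) : N * mom R 2 - err R ≤ wsum R N 1 := by
  have h := abs_wsum_sub_le (R := R) (N := N) one_pos (Nat.coprime_one_left 6)
  simp only [Nat.lcm_one_left, quad_form_one] at h
  simp only [Nat.primeFactors_one, card_empty, pow_zero, one_mul] at h
  linarith [(abs_le.1 h).1]

lemma coprime_six_of_prime {p : ℕ} (hp : p.Prime) (hp5 : 5 ≤ p) : p.Coprime 6 := by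
  have : Nat.Coprime p (2 * 3) := Nat.Coprime.mul_right
    ((Nat.coprime_primes hp Nat.prime_two).2 (by omega))
    ((Nat.coprime_primes hp Nat.prime_three).2 (by omega))
  exact this

lemma lcm_prime_pow_eq {R p a d e : ℕ} (hp : p.Prime) (ha : 0 < a) (hd : d ∈ supp R)
    (he : e ∈ supp R) :
    (p ^ a).lcm (d.lcm e) = p ^ a * (strip p d).lcm (strip p e) ∧
      (p ^ a).Coprime ((strip p d).lcm (strip p e)) := by
  have h1 : ∀ d ∈ supp R, strip p d ∣ d ∧ p.Coprime (strip p d) ∧ d ∣ p ^ a * strip p d := by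
    intro d hd
    have h := (dvd_strip_iff hp hd (r := strip p d)).1 dvd_rfl
    refine ⟨h.1, hp.coprime_iff_not_dvd.2 h.2, ?_⟩
    unfold strip
    split_ifs with hpd
    · obtain ⟨m, rfl⟩ := hpd
      rw [Nat.mul_div_cancel_left _ hp.pos]
      exact mul_dvd_mul_right (dvd_pow_self p ha.ne') m
    · exact dvd_mul_left d _
  obtain ⟨d1, d2, d3⟩ := h1 d hd
  obtain ⟨e1, e2, e3⟩ := h1 e he
  have hcop : (p ^ a).Coprime ((strip p d).lcm (strip p e)) :=
    Nat.Coprime.pow_left a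
      ((Nat.Coprime.mul_right d2 e2).coprime_dvd_right (Nat.lcm_dvd_mul _ _))
  refine ⟨Nat.dvd_antisymm ?_ ?_, hcop⟩
  · refine Nat.lcm_dvd (dvd_mul_right _ _) (Nat.lcm_dvd ?_ ?_)
    · exact d3.trans (mul_dvd_mul_left _ (Nat.dvd_lcm_left _ _))
    · exact e3.trans (mul_dvd_mul_left _ (Nat.dvd_lcm_right _ _))
  · refine hcop.mul_dvd_of_dvd_of_dvd (Nat.dvd_lcm_left _ _) (Nat.lcm_dvd ?_ ?_)
    · exact d1.trans ((Nat.dvd_lcm_left d e).trans (Nat.dvd_lcm_right _ _))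
    · exact e1.trans ((Nat.dvd_lcm_right d e).trans (Nat.dvd_lcm_right _ _))

/-- Weighted upper bound for the `n` with `p ^ a ∣ triple n`; the modulus `[p ^ a, d, e]` factors
as `p ^ a` times the lcm of the prime-to-`p` parts of `d` and `e`. -/
lemma wsum_prime_pow_le {R N p a : ℕ} (hp : p.Prime) (hp5 : 5 ≤ p) (ha : 0 < a) :
    wsum R N (p ^ a) ≤ N * (3 / (p : ℝ) ^ a *
      ∑ r ∈ supp R, hfun r * min (Real.log p) (ell R r) ^ 2) + 3 * err R := by
  have h := abs_wsum_sub_le (R := R) (N := N) (pow_pos hp.pos a)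
    (Nat.Coprime.pow_left a (coprime_six_of_prime hp hp5))
  have hpf : (p ^ a).primeFactors.card = 1 := by
    rw [Nat.primeFactors_pow p ha.ne', hp.primeFactors, card_singleton]
  have hdens : dens (p ^ a) = 3 / (p : ℝ) ^ a := by
    unfold dens; rw [hpf]; push_cast; ring
  have hq : ∑ d ∈ supp R, ∑ e ∈ supp R, lam R d * lam R e * dens ((p ^ a).lcm (d.lcm e)) =
      3 / (p : ℝ) ^ a * ∑ d ∈ supp R, ∑ e ∈ supp R,
        lam R d * lam R e * dens ((strip p d).lcm (strip p e)) := by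
    rw [mul_sum]
    refine sum_congr rfl fun d hd => ?_
    rw [mul_sum]
    refine sum_congr rfl fun e he => ?_
    obtain ⟨h1, h2⟩ := lcm_prime_pow_eq (a := a) hp ha hd he
    rw [h1, dens_mul h2, hdens]
    ring
  rw [hq, hpf, pow_one] at h
  have h2 := (abs_le.1 h).2
  have h3 : (N : ℝ) * (3 / (p : ℝ) ^ a * ∑ d ∈ supp R, ∑ e ∈ supp R,
        lam R d * lam R e * dens ((strip p d).lcm (strip p e))) ≤
      N * (3 / (p : ℝ) ^ a * ∑ r ∈ supp R, hfun r * min (Real.log p) (ell R r) ^ 2) := by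
    refine mul_le_mul_of_nonneg_left (mul_le_mul_of_nonneg_left ?_ (by positivity))
      (by positivity)
    exact quad_form_prime hp hp5
  linarith

lemma sum_hfun_mul_dvd_le {R d : ℕ} (hd : d ∈ supp R) (g : ℕ → ℝ) (hg : ∀ k, 0 ≤ g k) :
    ∑ k ∈ supp R with d ∣ k, hfun k * g k ≤ hfun d * ∑ m ∈ supp R, hfun m * g (d * m) := by
  have hd0 : 0 < d := (mem_supp.1 hd).1.1
  have h1 : ∀ k ∈ {k ∈ supp R | d ∣ k}, hfun k * g k = hfun d * (hfun (k / d) * g (d * (k / d))) := by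
    intro k hk
    rw [mem_filter] at hk
    obtain ⟨hk, m, rfl⟩ := hk
    rw [Nat.mul_div_cancel_left _ hd0, hfun_mul (Nat.coprime_of_squarefree_mul (mem_supp.1 hk).2.1)]
    ring
  have hinj : Set.InjOn (fun k => k / d) (({k ∈ supp R | d ∣ k} : Finset ℕ) : Set ℕ) := by
    intro a ha b hb hab
    exact (Nat.div_left_inj (mem_filter.1 (mem_coe.1 ha)).2 (mem_filter.1 (mem_coe.1 hb)).2).1 hab
  have hsub : image (fun k => k / d) {k ∈ supp R | d ∣ k} ⊆ supp R := by
    intro m hm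
    obtain ⟨k, hk, rfl⟩ := mem_image.1 hm
    rw [mem_filter] at hk
    exact mem_supp_of_dvd hk.1 (Nat.div_dvd_of_dvd hk.2)
  rw [sum_congr rfl h1, ← mul_sum, ← sum_image (f := fun m => hfun m * g (d * m)) hinj]
  refine mul_le_mul_of_nonneg_left ?_ (hfun_nonneg_of_mem hd)
  exact sum_le_sum_of_subset_of_nonneg hsub
    fun r hr _ => mul_nonneg (hfun_nonneg_of_mem hr) (hg _)

lemma sum_hfun_dvd_le {R d : ℕ} (hd : d ∈ supp R) :
    ∑ k ∈ supp R with d ∣ k, hfun k ≤ hfun d * mom R 0 := by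
  simpa [mom] using sum_hfun_mul_dvd_le hd (fun _ => 1) (fun _ => zero_le_one)

lemma mom_nonneg (R j : ℕ) : 0 ≤ mom R j :=
  sum_nonneg fun r hr => mul_nonneg (hfun_nonneg_of_mem hr) (pow_nonneg (ell_nonneg R r) j)

lemma abs_lam_le {R d : ℕ} (hd : d ∈ supp R) : |lam R d| ≤ Real.log R * mom R 0 ^ 2 := by
  have hd' := mem_supp.1 hd
  have hlog := Real.log_natCast_nonneg R
  have hsum : ∑ k ∈ supp R with d ∣ k, hfun k * ell R k ≤ Real.log R * (hfun d * mom R 0) := by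
    refine le_trans ?_ (mul_le_mul_of_nonneg_left (sum_hfun_dvd_le hd) hlog)
    rw [mul_sum]
    refine sum_le_sum fun k hk => ?_
    rw [mul_comm]
    exact mul_le_mul_of_nonneg_right ell_le_log (hfun_nonneg_of_mem (mem_filter.1 hk).1)
  have hsum0 : 0 ≤ ∑ k ∈ supp R with d ∣ k, hfun k * ell R k :=
    sum_nonneg fun k hk => mul_nonneg (hfun_nonneg_of_mem (mem_filter.1 hk).1) (ell_nonneg R k)
  have hdens := dens_pos hd'.1.1
  have hmu : |(ArithmeticFunction.moebius d : ℝ)| = 1 := by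
    have := moebius_sq_of_mem hd
    rw [← sq_abs] at this
    exact (pow_eq_one_iff_of_nonneg (abs_nonneg _) two_ne_zero).1 this
  have hratio : hfun d / dens d ≤ mom R 0 := by
    rw [hfun_div_dens_eq_sum hd'.2.1 hd'.2.2]
    unfold mom
    simp only [pow_zero, mul_one]
    exact sum_le_sum_of_subset_of_nonneg
      (fun j hj => mem_supp_of_dvd hd (Nat.dvd_of_mem_divisors hj))
      fun r hr _ => hfun_nonneg_of_mem hr
  unfold lam
  rw [abs_mul, abs_mul, hmu, one_mul, abs_of_pos (inv_pos.2 hdens), abs_of_nonneg hsum0]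
  calc (dens d)⁻¹ * _ ≤ (dens d)⁻¹ * (Real.log R * (hfun d * mom R 0)) :=
        mul_le_mul_of_nonneg_left hsum (inv_pos.2 hdens).le
    _ = Real.log R * (hfun d / dens d * mom R 0) := by ring
    _ ≤ Real.log R * (mom R 0 * mom R 0) := by
        gcongr
        exact mom_nonneg R 0
    _ = _ := by ring

lemma err_le (R : ℕ) : err R ≤ (Real.log R * mom R 0 ^ 3 * R) ^ 2 := by
  have hlog := Real.log_natCast_nonneg R
  have hH := mom_nonneg R 0
  unfold err
  refine pow_le_pow_left₀ (sum_nonneg fun d _ => by positivity) ?_ 2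
  have h1 : ∀ d ∈ supp R, |lam R d| * 3 ^ d.primeFactors.card ≤
      Real.log R * mom R 0 ^ 2 * (R * hfun d) := by
    intro d hd
    have hd' := mem_supp.1 hd
    refine mul_le_mul (abs_lam_le hd) ?_ (by positivity) (by positivity)
    have hd0 : (0 : ℝ) < d := by exact_mod_cast hd'.1.1
    have h2 := dens_le_hfun hd'.2.1 hd'.2.2
    unfold dens at h2
    rw [div_le_iff₀ hd0] at h2
    refine h2.trans ?_
    rw [mul_comm]
    exact mul_le_mul_of_nonneg_right (by exact_mod_cast hd'.1.2) (hfun_nonneg_of_mem hd)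
  refine (sum_le_sum h1).trans (le_of_eq ?_)
  rw [← mul_sum, ← mul_sum]
  have : ∑ r ∈ supp R, hfun r = mom R 0 := by simp [mom]
  rw [this]; ring

lemma mom_zero_le_prod (R : ℕ) :
    mom R 0 ≤ ∏ p ∈ Icc 1 R with p.Prime ∧ 5 ≤ p, (1 + 3 / ((p : ℝ) - 3)) := by
  rw [prod_one_add]
  have hinj : Set.InjOn Nat.primeFactors (supp R : Set ℕ) := by
    intro a ha b hb hab
    rw [← Nat.prod_primeFactors_of_squarefree (mem_supp.1 (mem_coe.1 ha)).2.1,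
      ← Nat.prod_primeFactors_of_squarefree (mem_supp.1 (mem_coe.1 hb)).2.1, hab]
  have h1 : mom R 0 = ∑ t ∈ (supp R).image Nat.primeFactors, ∏ p ∈ t, 3 / ((p : ℝ) - 3) := by
    rw [sum_image hinj]
    simp [mom, hfun]
  rw [h1]
  refine sum_le_sum_of_subset_of_nonneg ?_ ?_
  · intro t ht
    obtain ⟨d, hd, rfl⟩ := mem_image.1 ht
    have hd' := mem_supp.1 hd
    rw [mem_powerset]
    intro p hp
    have hp' := Nat.prime_of_mem_primeFactors hp
    have hpd := Nat.dvd_of_mem_primeFactors hp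
    rw [mem_filter, mem_Icc]
    exact ⟨⟨hp'.one_le, (Nat.le_of_dvd hd'.1.1 hpd).trans hd'.1.2⟩, hp',
      five_le_of_dvd hp' hd'.2.2 hpd⟩
  · intro t ht _
    refine prod_nonneg fun p hp => ?_
    have h5 : (5 : ℝ) ≤ p := by exact_mod_cast (mem_filter.1 (mem_powerset.1 ht hp)).2.2
    exact div_nonneg (by norm_num) (by linarith)

/-- The mass `∑ h(r)` grows more slowly than any power of `R`; the exponent `1/100` suffices. -/
lemma exists_mom_zero_le :
    ∃ C : ℝ, 0 < C ∧ ∀ R : ℕ, 1 ≤ R → mom R 0 ≤ C * Real.exp (Real.log R / 100) := by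
  obtain ⟨B, hB, hmert⟩ := exists_mertens
  -- `1 / p ≤ log p / (750 p)` for `p` beyond `K`, and `15 / 2 / 750 = 1 / 100`
  set K : ℕ := ⌈Real.exp 750⌉₊ with hK
  refine ⟨Real.exp (15 / 2 * (B / 750 + K)), Real.exp_pos _, fun R hR => ?_⟩
  refine (mom_zero_le_prod R).trans ?_
  have h1 : ∏ p ∈ Icc 1 R with p.Prime ∧ 5 ≤ p, (1 + 3 / ((p : ℝ) - 3)) ≤
      ∏ p ∈ Icc 1 R with p.Prime ∧ 5 ≤ p, Real.exp (15 / 2 * (1 / (p : ℝ))) := by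
    refine prod_le_prod ?_ ?_
    · intro p hp
      have h5 : (5 : ℝ) ≤ p := by exact_mod_cast (mem_filter.1 hp).2.2
      have : 0 ≤ 3 / ((p : ℝ) - 3) := div_nonneg (by norm_num) (by linarith)
      linarith
    · intro p hp
      have h5 : (5 : ℝ) ≤ p := by exact_mod_cast (mem_filter.1 hp).2.2
      have h2 : 3 / ((p : ℝ) - 3) ≤ 15 / 2 * (1 / (p : ℝ)) := by
        rw [mul_one_div, div_le_div_iff₀ (by linarith) (by linarith)]
        linarith
      have := Real.add_one_le_exp (15 / 2 * (1 / (p : ℝ)))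
      linarith
  refine h1.trans ?_
  rw [← Real.exp_sum, ← Real.exp_add, Real.exp_le_exp, ← mul_sum]
  have h3 : ∀ p ∈ {p ∈ Icc 1 R | p.Prime ∧ 5 ≤ p}, 1 / (p : ℝ) ≤
      1 / 750 * primeWeight p + if p ∈ Icc 1 K then 1 else 0 := by
    intro p hp
    rw [mem_filter, mem_Icc] at hp
    have hp0 : (1 : ℝ) ≤ p := by exact_mod_cast hp.1.1
    have hw := primeWeight_nonneg p
    split_ifs with h
    · have : 1 / (p : ℝ) ≤ 1 := by rw [div_le_one (by linarith)]; exact hp0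
      linarith
    · rw [mem_Icc] at h
      have hKp : (K : ℝ) ≤ p := by exact_mod_cast (by omega : K ≤ p)
      have h4 : 750 ≤ Real.log p := by
        rw [Real.le_log_iff_exp_le (by linarith)]
        exact (Nat.le_ceil _).trans hKp
      unfold primeWeight
      rw [if_pos hp.2.1, add_zero, ← mul_div_assoc]
      gcongr
      linarith
  have h4 : ∑ p ∈ Icc 1 R with p.Prime ∧ 5 ≤ p, 1 / (p : ℝ) ≤
      1 / 750 * (Real.log R + B) + K := by
    refine (sum_le_sum h3).trans ?_
    rw [sum_add_distrib, ← mul_sum]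
    refine add_le_add (mul_le_mul_of_nonneg_left ?_ (by norm_num)) ?_
    · refine (sum_le_sum_of_subset_of_nonneg (filter_subset _ _)
        fun k _ _ => primeWeight_nonneg k).trans ?_
      linarith [(abs_le.1 (hmert R hR)).2]
    · rw [← sum_filter, sum_const, nsmul_eq_mul, mul_one]
      have h5 : #{p ∈ {p ∈ Icc 1 R | p.Prime ∧ 5 ≤ p} | p ∈ Icc 1 K} ≤ #(Icc 1 K) :=
        card_le_card fun p hp => (mem_filter.1 hp).2
      rw [Nat.card_Icc, Nat.add_sub_cancel] at h5
      exact_mod_cast h5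
  linarith

/-- Comparison of the first two moments: `log R * ∑ h ℓ` is at most `5/2 * ∑ h ℓ²` up to lower
order, obtained by writing `log r` as a sum over the primes dividing `r`. -/
lemma exists_mom_one_le :
    ∃ C : ℝ, 0 < C ∧ ∀ R : ℕ, 1 ≤ R →
      Real.log R * mom R 1 ≤ 5 / 2 * mom R 2 + C * mom R 1 := by
  obtain ⟨C₁, hC₁, hpw⟩ := exists_sum_primeWeight_mul_sub_le
  obtain ⟨C₂, hC₂, hsq⟩ := exists_sum_log_div_sq_le
  refine ⟨3 * C₁ + 45 / 2 * C₂, by positivity, fun R hR => ?_⟩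
  set P : Finset ℕ := {p ∈ Icc 1 R | p.Prime ∧ 5 ≤ p} with hP
  have hlogr : ∀ r ∈ supp R, Real.log r = ∑ p ∈ P, if p ∣ r then Real.log p else 0 := by
    intro r hr
    have hr' := mem_supp.1 hr
    have hset : {p ∈ P | p ∣ r} = r.primeFactors := by
      ext p
      simp only [hP, mem_filter, mem_Icc, Nat.mem_primeFactors]
      constructor
      · rintro ⟨⟨-, hp, -⟩, h⟩
        exact ⟨hp, h, by omega⟩
      · rintro ⟨hp, h, -⟩
        exact ⟨⟨⟨hp.one_le, (Nat.le_of_dvd hr'.1.1 h).trans hr'.1.2⟩, hp,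
          five_le_of_dvd hp hr'.2.2 h⟩, h⟩
    rw [← sum_filter, hset]
    conv_lhs => rw [← Nat.prod_primeFactors_of_squarefree hr'.2.1]
    rw [Nat.cast_prod, Real.log_prod]
    intro p hp
    exact_mod_cast (Nat.prime_of_mem_primeFactors hp).ne_zero
  have hsplit : Real.log R * mom R 1 =
      mom R 2 + ∑ r ∈ supp R, hfun r * ell R r * Real.log r := by
    unfold mom
    rw [mul_sum, ← sum_add_distrib]
    refine sum_congr rfl fun r hr => ?_
    have := ell_eq hr
    have h2 : Real.log R = ell R r + Real.log r := by linarith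
    rw [h2]; ring
  have hswap : ∑ r ∈ supp R, hfun r * ell R r * Real.log r =
      ∑ p ∈ P, Real.log p * ∑ r ∈ supp R with p ∣ r, hfun r * ell R r := by
    rw [sum_congr rfl fun r hr => by rw [hlogr r hr, mul_sum], sum_comm]
    refine sum_congr rfl fun p _ => ?_
    rw [mul_sum, sum_filter]
    refine sum_congr rfl fun r _ => ?_
    split_ifs <;> ring
  have hp_le : ∀ p ∈ P, Real.log p * ∑ r ∈ supp R with p ∣ r, hfun r * ell R r ≤
      ∑ r ∈ supp R, hfun r * ((3 * primeWeight p + 45 / 2 * (Real.log p / (p : ℝ) ^ 2)) *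
        max 0 (ell R r - Real.log p)) := by
    intro p hp
    rw [hP, mem_filter, mem_Icc] at hp
    have h5 : (5 : ℝ) ≤ p := by exact_mod_cast hp.2.2
    have hps : p ∈ supp R := mem_supp.2 ⟨hp.1, hp.2.1.prime.squarefree,
      coprime_six_of_prime hp.2.1 hp.2.2⟩
    have hlog : 0 ≤ Real.log p := Real.log_natCast_nonneg p
    refine (mul_le_mul_of_nonneg_left
      (sum_hfun_mul_dvd_le hps (ell R) (ell_nonneg R)) hlog).trans ?_
    rw [mul_sum, mul_sum]
    refine sum_le_sum fun r hr => ?_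
    have hr' := mem_supp.1 hr
    have hell : ell R (p * r) = max 0 (ell R r - Real.log p) := by
      rw [ell_eq hr]
      unfold ell
      push_cast
      rw [Real.log_mul (by linarith) (by have := hr'.1.1; positivity)]
      congr 1; ring
    have hcoef : Real.log p * hfun p ≤
        3 * primeWeight p + 45 / 2 * (Real.log p / (p : ℝ) ^ 2) := by
      unfold primeWeight
      rw [hfun_prime hp.2.1, if_pos hp.2.1]
      have h6 : 3 / ((p : ℝ) - 3) ≤ 3 / p + 45 / 2 / (p : ℝ) ^ 2 := by
        rw [div_add_div _ _ (by linarith) (by positivity),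
          div_le_div_iff₀ (by linarith) (by positivity)]
        nlinarith [mul_nonneg (show (0:ℝ) ≤ p by linarith) (show (0:ℝ) ≤ p - 5 by linarith)]
      calc Real.log p * (3 / ((p : ℝ) - 3)) ≤ Real.log p * (3 / p + 45 / 2 / (p : ℝ) ^ 2) :=
            mul_le_mul_of_nonneg_left h6 hlog
        _ = _ := by ring
    rw [hell]
    calc Real.log p * (hfun p * (hfun r * max 0 (ell R r - Real.log p))) =
        hfun r * (Real.log p * hfun p * max 0 (ell R r - Real.log p)) := by ring
      _ ≤ _ := mul_le_mul_of_nonneg_left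
          (mul_le_mul_of_nonneg_right hcoef (le_max_left _ _)) (hfun_nonneg_of_mem hr)
  have hr_le : ∀ r ∈ supp R, ∑ p ∈ P,
      (3 * primeWeight p + 45 / 2 * (Real.log p / (p : ℝ) ^ 2)) * max 0 (ell R r - Real.log p) ≤
      3 * (ell R r ^ 2 / 2 + C₁ * ell R r) + 45 / 2 * (C₂ * ell R r) := by
    intro r _
    have hL := ell_nonneg R r
    rw [sum_congr rfl fun p _ => add_mul _ _ _, sum_add_distrib]
    refine add_le_add ?_ ?_
    · rw [sum_congr rfl fun p _ => mul_assoc _ _ _, ← mul_sum]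
      refine mul_le_mul_of_nonneg_left (le_trans ?_ (hpw R (ell R r) hR hL ell_le_log))
        (by norm_num)
      exact sum_le_sum_of_subset_of_nonneg (filter_subset _ _)
        fun p _ _ => mul_nonneg (primeWeight_nonneg p) (le_max_left _ _)
    · rw [sum_congr rfl fun p _ => mul_assoc _ _ _, ← mul_sum]
      refine mul_le_mul_of_nonneg_left ?_ (by norm_num)
      refine le_trans ?_ (mul_le_mul_of_nonneg_right (hsq P) hL)
      rw [sum_mul]
      refine sum_le_sum fun p _ => mul_le_mul_of_nonneg_left ?_
        (div_nonneg (Real.log_natCast_nonneg p) (by positivity))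
      exact max_le hL (by linarith [Real.log_natCast_nonneg p])
  have hmain : ∑ r ∈ supp R, hfun r * ell R r * Real.log r ≤
      ∑ r ∈ supp R, hfun r *
        (3 * (ell R r ^ 2 / 2 + C₁ * ell R r) + 45 / 2 * (C₂ * ell R r)) := by
    rw [hswap]
    refine (sum_le_sum hp_le).trans ?_
    rw [sum_comm]
    refine sum_le_sum fun r hr => ?_
    rw [← mul_sum]
    exact mul_le_mul_of_nonneg_left (hr_le r hr) (hfun_nonneg_of_mem hr)
  have hfin : ∑ r ∈ supp R, hfun r *
        (3 * (ell R r ^ 2 / 2 + C₁ * ell R r) + 45 / 2 * (C₂ * ell R r)) =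
      3 / 2 * mom R 2 + (3 * C₁ + 45 / 2 * C₂) * mom R 1 := by
    unfold mom
    rw [mul_sum, mul_sum, ← sum_add_distrib]
    exact sum_congr rfl fun r _ => by ring
  linarith

/-! ### The weighted sieve inequality -/

/-- The primes from `5` to `y`. -/
def sievePrimes (y : ℕ) : Finset ℕ := {p ∈ Icc 1 y | p.Prime ∧ 5 ≤ p}

lemma mem_sievePrimes {y p : ℕ} : p ∈ sievePrimes y ↔ (1 ≤ p ∧ p ≤ y) ∧ p.Prime ∧ 5 ≤ p := by
  simp [sievePrimes]

/-- Logarithmic weights: prime factors of `F` beyond `y = exp Y` contribute nonpositively to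
`Ω(F) - log F / Y`, and the others at most `1 - log p / Y` plus their excess multiplicity. -/
lemma cardFactors_le {F y A : ℕ} {Y : ℝ} (hF : 0 < F) (h6 : F.Coprime 6) (hY : Real.log y = Y)
    (hY0 : 0 < Y) (hA : F < 2 ^ (A + 1)) :
    (ArithmeticFunction.cardFactors F : ℝ) ≤ Real.log F / Y +
      ∑ p ∈ sievePrimes y, (1 - Real.log p / Y) * (if p ∣ F then 1 else 0) +
      ∑ p ∈ sievePrimes y, ∑ a ∈ Icc 2 A, (if p ^ a ∣ F then (1 : ℝ) else 0) := by
  have hy : 0 < y := by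
    rcases Nat.eq_zero_or_pos y with rfl | h
    · simp at hY; linarith
    · exact h
  have hy' : (0 : ℝ) < y := by exact_mod_cast hy
  have hOm : (ArithmeticFunction.cardFactors F : ℝ) =
      ∑ p ∈ F.primeFactors, (F.factorization p : ℝ) := by
    rw [ArithmeticFunction.cardFactors_eq_sum_factorization, Finsupp.sum,
      Nat.support_factorization]
    push_cast; rfl
  have hlog : Real.log F = ∑ p ∈ F.primeFactors, (F.factorization p : ℝ) * Real.log p := by
    conv_lhs => rw [← Nat.prod_factorization_pow_eq_self hF.ne']
    rw [Nat.prod_factorization_eq_prod_primeFactors, Nat.cast_prod, Real.log_prod]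
    · refine sum_congr rfl fun p _ => ?_
      rw [Nat.cast_pow, Real.log_pow]
    · intro p hp
      have := (Nat.prime_of_mem_primeFactors hp).ne_zero
      positivity
  have hterm : ∀ p ∈ F.primeFactors, (F.factorization p : ℝ) * (1 - Real.log p / Y) ≤
      if p ∈ sievePrimes y then (1 - Real.log p / Y) +
        ∑ a ∈ Icc 2 A, (if p ^ a ∣ F then (1 : ℝ) else 0) else 0 := by
    intro p hp
    have hpp := Nat.prime_of_mem_primeFactors hp
    have hpF := Nat.dvd_of_mem_primeFactors hp
    have hp0 : (0 : ℝ) < p := by exact_mod_cast hpp.pos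
    have hv1 : 1 ≤ F.factorization p := (hpp.dvd_iff_one_le_factorization hF.ne').1 hpF
    split_ifs with h
    · have hcard : ∑ a ∈ Icc 2 A, (if p ^ a ∣ F then (1 : ℝ) else 0) = F.factorization p - 1 := by
        rw [← sum_filter, sum_const, nsmul_eq_mul, mul_one]
        have hset : {a ∈ Icc 2 A | p ^ a ∣ F} = Icc 2 (F.factorization p) := by
          ext a
          rw [mem_filter, mem_Icc, mem_Icc, hpp.pow_dvd_iff_le_factorization hF.ne']
          constructor
          · rintro ⟨⟨h1, -⟩, h2⟩
            exact ⟨h1, h2⟩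
          · rintro ⟨h1, h2⟩
            refine ⟨⟨h1, ?_⟩, h2⟩
            have h3 : 2 ^ F.factorization p ≤ F :=
              (Nat.pow_le_pow_left hpp.two_le _).trans
                (Nat.le_of_dvd hF (Nat.ordProj_dvd F p))
            have h4 := (Nat.pow_lt_pow_iff_right (by norm_num : 1 < 2)).1 (h3.trans_lt hA)
            omega
        rw [hset, Nat.card_Icc, Nat.cast_sub (by omega)]
        push_cast; ring
      rw [hcard]
      have hlp : 0 ≤ Real.log p / Y := div_nonneg (Real.log_natCast_nonneg p) hY0.le
      have hv1' : (1 : ℝ) ≤ F.factorization p := by exact_mod_cast hv1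
      nlinarith
    · have hpy : y < p := by
        by_contra hle
        exact h (mem_sievePrimes.2 ⟨⟨hpp.one_le, by omega⟩, hpp, five_le_of_dvd hpp h6 hpF⟩)
      have h1 : Y ≤ Real.log p := by
        rw [← hY]
        exact Real.log_le_log hy' (by exact_mod_cast hpy.le)
      have h2 : 1 ≤ Real.log p / Y := by rwa [le_div_iff₀ hY0, one_mul]
      exact mul_nonpos_of_nonneg_of_nonpos (by positivity) (by linarith)
  have hsum := sum_le_sum hterm
  have hL : ∑ p ∈ F.primeFactors, (F.factorization p : ℝ) * (1 - Real.log p / Y) =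
      (ArithmeticFunction.cardFactors F : ℝ) - Real.log F / Y := by
    rw [hOm, hlog, sum_div, ← sum_sub_distrib]
    exact sum_congr rfl fun p _ => by ring
  have hset : {p ∈ F.primeFactors | p ∈ sievePrimes y} = {p ∈ sievePrimes y | p ∣ F} := by
    ext p
    rw [mem_filter, mem_filter, Nat.mem_primeFactors]
    constructor
    · rintro ⟨⟨-, h, -⟩, h'⟩; exact ⟨h', h⟩
    · rintro ⟨h', h⟩; exact ⟨⟨(mem_sievePrimes.1 h').2.1, h, hF.ne'⟩, h'⟩
  rw [hL, ← sum_filter, hset, sum_filter] at hsum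
  have hlast : ∑ p ∈ sievePrimes y, (if p ∣ F then (1 - Real.log p / Y) +
        ∑ a ∈ Icc 2 A, (if p ^ a ∣ F then (1 : ℝ) else 0) else 0) ≤
      ∑ p ∈ sievePrimes y, (1 - Real.log p / Y) * (if p ∣ F then 1 else 0) +
      ∑ p ∈ sievePrimes y, ∑ a ∈ Icc 2 A, (if p ^ a ∣ F then (1 : ℝ) else 0) := by
    rw [← sum_add_distrib]
    refine sum_le_sum fun p _ => ?_
    have h0 : 0 ≤ ∑ a ∈ Icc 2 A, (if p ^ a ∣ F then (1 : ℝ) else 0) :=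
      sum_nonneg fun a _ => by split_ifs <;> norm_num
    split_ifs
    · rw [mul_one]
    · rw [mul_zero, zero_add]; exact h0
  linarith

lemma triple_pos (n : ℕ) : 0 < triple n := by unfold triple; positivity

lemma triple_coprime (n : ℕ) : (triple n).Coprime 6 := by
  have h : ∀ k c : ℕ, c.Coprime 6 → (6 * k + c).Coprime 6 := by
    intro k c hc
    rw [Nat.coprime_mul_left_add_left]
    exact hc
  unfold triple
  refine Nat.Coprime.mul_left (Nat.Coprime.mul_left (h n 1 (by norm_num)) ?_) ?_
  · have := h (6 * n) 5 (by norm_num)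
    rwa [← mul_assoc] at this
  · have := h (6 * n) 7 (by norm_num)
    rwa [← mul_assoc] at this

lemma wt_nonneg (R n : ℕ) : 0 ≤ wt R n := sq_nonneg _

lemma err_nonneg (R : ℕ) : 0 ≤ err R := sq_nonneg _

/-- If every `triple n` on the interval has at least ten prime factors, then the weighted average
of the bound in `cardFactors_le` is at least ten. -/
lemma ten_mul_wsum_le {R N A y : ℕ} {Y G : ℝ} (hY : Real.log y = Y) (hY0 : 0 < Y)
    (h10 : ∀ n ∈ Ico N (2 * N), 10 ≤ ArithmeticFunction.cardFactors (triple n))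
    (hA : ∀ n ∈ Ico N (2 * N), triple n < 2 ^ (A + 1))
    (hG : ∀ n ∈ Ico N (2 * N), Real.log (triple n) ≤ G) :
    10 * wsum R N 1 ≤ G / Y * wsum R N 1 +
      ∑ p ∈ sievePrimes y, (1 - Real.log p / Y) * wsum R N (p ^ 1) +
      ∑ p ∈ sievePrimes y, ∑ a ∈ Icc 2 A, wsum R N (p ^ a) := by
  have hw1 : wsum R N 1 = ∑ n ∈ Ico N (2 * N), wt R n := by simp [wsum]
  have hwq : ∀ q, wsum R N q = ∑ n ∈ Ico N (2 * N), wt R n * if q ∣ triple n then 1 else 0 := by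
    intro q
    unfold wsum
    rw [sum_filter]
    exact sum_congr rfl fun n _ => by split_ifs <;> simp
  have hpt : ∀ n ∈ Ico N (2 * N), wt R n * 10 ≤ wt R n * (G / Y +
      ∑ p ∈ sievePrimes y, (1 - Real.log p / Y) * (if p ∣ triple n then 1 else 0) +
      ∑ p ∈ sievePrimes y, ∑ a ∈ Icc 2 A, (if p ^ a ∣ triple n then (1 : ℝ) else 0)) := by
    intro n hn
    refine mul_le_mul_of_nonneg_left ?_ (wt_nonneg R n)
    have h1 := cardFactors_le (triple_pos n) (triple_coprime n) hY hY0 (hA n hn)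
    have h2 : (10 : ℝ) ≤ ArithmeticFunction.cardFactors (triple n) := by exact_mod_cast h10 n hn
    have h3 : Real.log (triple n) / Y ≤ G / Y := div_le_div_of_nonneg_right (hG n hn) hY0.le
    linarith
  have hsum := sum_le_sum hpt
  simp only [mul_add, sum_add_distrib] at hsum
  rw [← sum_mul, ← sum_mul, ← hw1] at hsum
  have e1 : ∑ n ∈ Ico N (2 * N), wt R n * ∑ p ∈ sievePrimes y,
      (1 - Real.log p / Y) * (if p ∣ triple n then 1 else 0) =
      ∑ p ∈ sievePrimes y, (1 - Real.log p / Y) * wsum R N (p ^ 1) := by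
    simp only [mul_sum]
    rw [sum_comm]
    refine sum_congr rfl fun p _ => ?_
    rw [hwq, pow_one, mul_sum]
    exact sum_congr rfl fun n _ => by ring
  have e2 : ∑ n ∈ Ico N (2 * N), wt R n * ∑ p ∈ sievePrimes y, ∑ a ∈ Icc 2 A,
      (if p ^ a ∣ triple n then (1 : ℝ) else 0) =
      ∑ p ∈ sievePrimes y, ∑ a ∈ Icc 2 A, wsum R N (p ^ a) := by
    simp only [mul_sum]
    rw [sum_comm]
    refine sum_congr rfl fun p _ => ?_
    rw [sum_comm]
    exact sum_congr rfl fun a _ => (hwq _).symm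
  rw [e1, e2] at hsum
  linarith

/-! ### Averaging over the prime powers -/

/-- The contribution of first powers of primes, averaged against the sieve weights. -/
lemma exists_first_power_sum_le :
    ∃ C : ℝ, 0 < C ∧ ∀ R : ℕ, 2 ≤ R →
      ∑ p ∈ sievePrimes (R ^ 2), (1 - Real.log p / (2 * Real.log R)) *
        (3 / (p : ℝ) ^ 1 * ∑ r ∈ supp R, hfun r * min (Real.log p) (ell R r) ^ 2) ≤
      3 * (Real.log 5 - 11 / 30) * mom R 2 + C * mom R 1 := by
  obtain ⟨C₁, hC₁, h1⟩ := exists_sum_primeWeight_min_sq_le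
  obtain ⟨C₂, hC₂, h2⟩ := exists_mom_one_le
  refine ⟨3 * C₁ + 26 / 25 * C₂, by positivity, fun R hR => ?_⟩
  have hX : 0 < Real.log R := Real.log_pos (by exact_mod_cast hR)
  have hlogn : Real.log ((R ^ 2 : ℕ) : ℝ) = 2 * Real.log R := by
    push_cast; rw [Real.log_pow]; push_cast; ring
  have hr : ∀ r ∈ supp R, ∑ p ∈ sievePrimes (R ^ 2), (1 / (p : ℝ)) *
      (1 - Real.log p / (2 * Real.log R)) * min (Real.log p) (ell R r) ^ 2 ≤
      (Real.log 5 - 11 / 30) * ell R r ^ 2 +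
        26 / 75 * (Real.log R * ell R r - 5 / 2 * ell R r ^ 2) + C₁ * ell R r := by
    intro r _
    refine le_trans ?_ (h1 (R ^ 2) (ell R r) (Real.log R) (Nat.one_le_pow _ _ (by omega)) hlogn hX
      (ell_nonneg R r) ell_le_log)
    refine sum_le_sum_of_subset_of_nonneg ?_ ?_
    · intro p hp
      have hp' := mem_sievePrimes.1 hp
      exact mem_filter.2 ⟨mem_Icc.2 hp'.1, hp'.2.1⟩
    · intro p hp _
      rw [mem_filter, mem_Icc] at hp
      have h3 : Real.log p ≤ 2 * Real.log R := by
        rw [← hlogn]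
        exact Real.log_le_log (by exact_mod_cast hp.1.1) (by exact_mod_cast hp.1.2)
      have h4 : Real.log p / (2 * Real.log R) ≤ 1 := by
        rw [div_le_one (by positivity)]; exact h3
      have h5 : 0 ≤ 1 - Real.log p / (2 * Real.log R) := by linarith
      positivity
  have hswap : ∑ p ∈ sievePrimes (R ^ 2), (1 - Real.log p / (2 * Real.log R)) *
        (3 / (p : ℝ) ^ 1 * ∑ r ∈ supp R, hfun r * min (Real.log p) (ell R r) ^ 2) =
      ∑ r ∈ supp R, 3 * hfun r * ∑ p ∈ sievePrimes (R ^ 2), (1 / (p : ℝ)) *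
        (1 - Real.log p / (2 * Real.log R)) * min (Real.log p) (ell R r) ^ 2 := by
    simp only [mul_sum]
    rw [sum_comm]
    exact sum_congr rfl fun r _ => sum_congr rfl fun p _ => by ring
  rw [hswap]
  have hle : ∑ r ∈ supp R, 3 * hfun r * ∑ p ∈ sievePrimes (R ^ 2), (1 / (p : ℝ)) *
        (1 - Real.log p / (2 * Real.log R)) * min (Real.log p) (ell R r) ^ 2 ≤
      ∑ r ∈ supp R, 3 * hfun r * ((Real.log 5 - 11 / 30) * ell R r ^ 2 +
        26 / 75 * (Real.log R * ell R r - 5 / 2 * ell R r ^ 2) + C₁ * ell R r) :=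
    sum_le_sum fun r hr' => mul_le_mul_of_nonneg_left (hr r hr')
      (mul_nonneg (by norm_num) (hfun_nonneg_of_mem hr'))
  have heq : ∑ r ∈ supp R, 3 * hfun r * ((Real.log 5 - 11 / 30) * ell R r ^ 2 +
        26 / 75 * (Real.log R * ell R r - 5 / 2 * ell R r ^ 2) + C₁ * ell R r) =
      3 * (Real.log 5 - 11 / 30) * mom R 2 +
        26 / 25 * (Real.log R * mom R 1 - 5 / 2 * mom R 2) + 3 * C₁ * mom R 1 := by
    unfold mom
    simp only [mul_sum, mul_sub]
    rw [← sum_sub_distrib, ← sum_add_distrib, ← sum_add_distrib]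
    exact sum_congr rfl fun r _ => by ring
  have := h2 R (by omega)
  linarith

lemma sum_inv_pow_le {p : ℝ} (hp : 2 ≤ p) (A : ℕ) :
    ∑ a ∈ Icc 2 A, 3 / p ^ a ≤ 6 / p ^ 2 := by
  have hp0 : 0 < p := by linarith
  have key : ∀ A : ℕ, ∑ a ∈ Icc 2 (A + 1), 3 / p ^ a + 6 / p ^ (A + 2) ≤ 6 / p ^ 2 := by
    intro A
    induction A with
    | zero => simp
    | succ A ih =>
      rw [sum_Icc_succ_top (by omega)]
      have h : 3 / p ^ (A + 1 + 1) + 6 / p ^ (A + 1 + 2) ≤ 6 / p ^ (A + 2) := by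
        have h1 : 6 / p ^ (A + 1 + 2) = 6 / p ^ (A + 2) * (1 / p) := by
          rw [show A + 1 + 2 = A + 2 + 1 by ring, pow_succ]; field_simp
        have h2 : 1 / p ≤ 1 / 2 := one_div_le_one_div_of_le (by norm_num) hp
        have h3 : 3 / p ^ (A + 1 + 1) = 6 / p ^ (A + 2) * (1 / 2) := by
          rw [show A + 1 + 1 = A + 2 by ring]; ring
        have h4 : 0 ≤ 6 / p ^ (A + 2) := by positivity
        rw [h1, h3]
        nlinarith
      linarith
  rcases Nat.eq_zero_or_pos A with rfl | hA
  · simp; positivity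
  · obtain ⟨B, rfl⟩ := Nat.exists_eq_add_of_le' hA
    have h1 := key B
    have h2 : 0 ≤ 6 / p ^ (B + 2) := by positivity
    linarith

/-- The contribution of higher prime powers is of lower order. -/
lemma exists_higher_power_sum_le :
    ∃ C : ℝ, 0 < C ∧ ∀ R A : ℕ,
      ∑ p ∈ sievePrimes (R ^ 2), ∑ a ∈ Icc 2 A,
        (3 / (p : ℝ) ^ a * ∑ r ∈ supp R, hfun r * min (Real.log p) (ell R r) ^ 2) ≤
      C * mom R 1 := by
  obtain ⟨C, hC, h⟩ := exists_sum_log_div_sq_le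
  refine ⟨6 * C, by positivity, fun R A => ?_⟩
  have hp : ∀ p ∈ sievePrimes (R ^ 2), ∑ a ∈ Icc 2 A,
        (3 / (p : ℝ) ^ a * ∑ r ∈ supp R, hfun r * min (Real.log p) (ell R r) ^ 2) ≤
      6 * (Real.log p / (p : ℝ) ^ 2) * mom R 1 := by
    intro p hp
    have hp2 : (2 : ℝ) ≤ p := by exact_mod_cast (mem_sievePrimes.1 hp).2.1.two_le
    have hlog : 0 ≤ Real.log p := Real.log_natCast_nonneg p
    have h1 : ∑ r ∈ supp R, hfun r * min (Real.log p) (ell R r) ^ 2 ≤ Real.log p * mom R 1 := by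
      unfold mom
      rw [mul_sum]
      refine sum_le_sum fun r hr => ?_
      have hL := ell_nonneg R r
      have h2 : min (Real.log p) (ell R r) ^ 2 ≤ Real.log p * ell R r := by
        rw [sq]
        exact mul_le_mul (min_le_left _ _) (min_le_right _ _) (le_min hlog hL) hlog
      calc hfun r * min (Real.log p) (ell R r) ^ 2 ≤ hfun r * (Real.log p * ell R r) :=
            mul_le_mul_of_nonneg_left h2 (hfun_nonneg_of_mem hr)
        _ = _ := by ring
    have h0 : 0 ≤ Real.log p * mom R 1 := mul_nonneg hlog (mom_nonneg R 1)
    rw [← sum_mul]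
    calc (∑ a ∈ Icc 2 A, 3 / (p : ℝ) ^ a) * _ ≤
          (∑ a ∈ Icc 2 A, 3 / (p : ℝ) ^ a) * (Real.log p * mom R 1) :=
          mul_le_mul_of_nonneg_left h1 (sum_nonneg fun a _ => by positivity)
      _ ≤ 6 / (p : ℝ) ^ 2 * (Real.log p * mom R 1) :=
          mul_le_mul_of_nonneg_right (sum_inv_pow_le hp2 A) h0
      _ = _ := by ring
  refine (sum_le_sum hp).trans ?_
  rw [← sum_mul, ← mul_sum]
  exact mul_le_mul_of_nonneg_right (mul_le_mul_of_nonneg_left (h _) (by norm_num))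
    (mom_nonneg R 1)

/-- The inequality between moments forced by the assumption that every `triple n` on the interval
has at least ten prime factors. -/
lemma exists_main_inequality :
    ∃ C : ℝ, 0 < C ∧ ∀ (R N A : ℕ) (G : ℝ), 2 ≤ R →
      (∀ n ∈ Ico N (2 * N), 10 ≤ ArithmeticFunction.cardFactors (triple n)) →
      (∀ n ∈ Ico N (2 * N), triple n < 2 ^ (A + 1)) →
      (∀ n ∈ Ico N (2 * N), Real.log (triple n) ≤ G) → G ≤ 10 * (2 * Real.log R) →
      (10 - G / (2 * Real.log R)) * (N * mom R 2 - err R) ≤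
        N * (3 * (Real.log 5 - 11 / 30) * mom R 2 + C * mom R 1) +
          3 * (R : ℝ) ^ 2 * (A + 1) * err R := by
  obtain ⟨C₁, hC₁, h1⟩ := exists_first_power_sum_le
  obtain ⟨C₂, hC₂, h2⟩ := exists_higher_power_sum_le
  refine ⟨C₁ + C₂, by positivity, fun R N A G hR h10 hA hG hG10 => ?_⟩
  have hX : 0 < Real.log R := Real.log_pos (by exact_mod_cast hR)
  have hlogn : Real.log ((R ^ 2 : ℕ) : ℝ) = 2 * Real.log R := by
    push_cast; rw [Real.log_pow]; push_cast; ring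
  have hten := ten_mul_wsum_le (R := R) hlogn (by positivity) h10 hA hG
  have hE := err_nonneg R
  have hcard : ((sievePrimes (R ^ 2)).card : ℝ) ≤ (R : ℝ) ^ 2 := by
    have : (sievePrimes (R ^ 2)).card ≤ R ^ 2 := by
      have := card_filter_le (Icc 1 (R ^ 2)) (fun p => p.Prime ∧ 5 ≤ p)
      rwa [Nat.card_Icc, Nat.add_sub_cancel] at this
    exact_mod_cast this
  have hfirst : ∑ p ∈ sievePrimes (R ^ 2), (1 - Real.log p / (2 * Real.log R)) *
      wsum R N (p ^ 1) ≤ N * (3 * (Real.log 5 - 11 / 30) * mom R 2 + C₁ * mom R 1) +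
        (R : ℝ) ^ 2 * (3 * err R) := by
    have h3 : ∀ p ∈ sievePrimes (R ^ 2), (1 - Real.log p / (2 * Real.log R)) * wsum R N (p ^ 1) ≤
        N * ((1 - Real.log p / (2 * Real.log R)) *
          (3 / (p : ℝ) ^ 1 * ∑ r ∈ supp R, hfun r * min (Real.log p) (ell R r) ^ 2)) +
        3 * err R := by
      intro p hp
      have hp' := mem_sievePrimes.1 hp
      have h4 : Real.log p ≤ 2 * Real.log R := by
        rw [← hlogn]
        exact Real.log_le_log (by exact_mod_cast hp'.1.1) (by exact_mod_cast hp'.1.2)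
      have h5 : Real.log p / (2 * Real.log R) ≤ 1 := by
        rw [div_le_one (by positivity)]; exact h4
      have h6 : 0 ≤ Real.log p / (2 * Real.log R) :=
        div_nonneg (Real.log_natCast_nonneg p) (by positivity)
      have h7 := mul_le_mul_of_nonneg_left
        (wsum_prime_pow_le (R := R) (N := N) (a := 1) hp'.2.1 hp'.2.2 one_pos)
        (show 0 ≤ 1 - Real.log p / (2 * Real.log R) by linarith)
      refine h7.trans ?_
      rw [mul_add]
      refine add_le_add (le_of_eq (by ring)) ?_
      nlinarith
    refine (sum_le_sum h3).trans ?_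
    rw [sum_add_distrib, ← mul_sum, sum_const, nsmul_eq_mul]
    refine add_le_add (mul_le_mul_of_nonneg_left (h1 R hR) (by positivity)) ?_
    exact mul_le_mul_of_nonneg_right hcard (by positivity)
  have hhigher : ∑ p ∈ sievePrimes (R ^ 2), ∑ a ∈ Icc 2 A, wsum R N (p ^ a) ≤
      N * (C₂ * mom R 1) + (R : ℝ) ^ 2 * (A * (3 * err R)) := by
    have h3 : ∀ p ∈ sievePrimes (R ^ 2), ∑ a ∈ Icc 2 A, wsum R N (p ^ a) ≤
        N * (∑ a ∈ Icc 2 A,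
          (3 / (p : ℝ) ^ a * ∑ r ∈ supp R, hfun r * min (Real.log p) (ell R r) ^ 2)) +
        A * (3 * err R) := by
      intro p hp
      have hp' := mem_sievePrimes.1 hp
      refine (sum_le_sum fun a ha => wsum_prime_pow_le (R := R) (N := N) (a := a) hp'.2.1 hp'.2.2
        (by have := (mem_Icc.1 ha).1; omega)).trans ?_
      rw [sum_add_distrib, ← mul_sum, sum_const, nsmul_eq_mul]
      refine add_le_add le_rfl (mul_le_mul_of_nonneg_right ?_ (by positivity))
      rw [Nat.card_Icc]
      exact_mod_cast (by omega : A + 1 - 2 ≤ A)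
    refine (sum_le_sum h3).trans ?_
    rw [sum_add_distrib, ← mul_sum, sum_const, nsmul_eq_mul]
    refine add_le_add (mul_le_mul_of_nonneg_left (h2 R A) (by positivity)) ?_
    exact mul_le_mul_of_nonneg_right hcard (by positivity)
  have hcoef : 0 ≤ 10 - G / (2 * Real.log R) := by
    have : G / (2 * Real.log R) ≤ 10 := by rw [div_le_iff₀ (by positivity)]; exact hG10
    linarith
  have h8 := mul_le_mul_of_nonneg_left (wsum_one_ge R N) hcoef
  nlinarith [h8, hfirst, hhigher, hten]

/-! ### Choice of parameters -/

lemma triple_le {N n : ℕ} (hn : n < 2 * N) : triple n ≤ 62208 * N ^ 3 := by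
  unfold triple
  calc (6 * n + 1) * (36 * n + 5) * (36 * n + 7) ≤ (12 * N) * (72 * N) * (72 * N) := by
        gcongr <;> omega
    _ = 62208 * N ^ 3 := by ring

lemma sq_log_le_mom_two {R : ℕ} (hR : 1 ≤ R) : Real.log R ^ 2 ≤ mom R 2 := by
  have h1 : 1 ∈ supp R := by simp [mem_supp, hR]
  have h := single_le_sum (f := fun r => hfun r * ell R r ^ 2)
    (fun r hr => mul_nonneg (hfun_nonneg_of_mem hr) (sq_nonneg _)) h1
  have h2 : hfun 1 * ell R 1 ^ 2 = Real.log R ^ 2 := by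
    rw [ell_eq h1]
    simp [hfun]
  rw [← h2]
  exact h

lemma log_five_lt : 3 * (Real.log 5 - 11 / 30) < 3.7525 := by
  -- `5 ^ 3 < 2 ^ 7`
  have h : 3 * Real.log 5 ≤ 7 * Real.log 2 := by
    have h1 : Real.log ((5 : ℝ) ^ 3) ≤ Real.log ((2 : ℝ) ^ 7) :=
      Real.log_le_log (by norm_num) (by norm_num)
    rw [Real.log_pow, Real.log_pow] at h1
    exact_mod_cast h1
  have := Real.log_two_lt_d9
  linarith

lemma log_const_le : Real.log 62208 ≤ 12 := by
  have h1 : Real.log 62208 ≤ Real.log ((2 : ℝ) ^ 16) :=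
    Real.log_le_log (by norm_num) (by norm_num)
  rw [Real.log_pow] at h1
  have := Real.log_two_lt_d9
  push_cast at h1
  linarith

/-- The rounding errors are at most `R ^ (2 + 6 / 100)` times `(log R) ^ 2`. -/
lemma exists_err_le :
    ∃ C : ℝ, 0 < C ∧ ∀ R : ℕ, 1 ≤ R →
      err R ≤ C * Real.log R ^ 2 * Real.exp (Real.log R * (206 / 100)) := by
  obtain ⟨C, hC, h⟩ := exists_mom_zero_le
  refine ⟨C ^ 6, by positivity, fun R hR => (err_le R).trans ?_⟩
  have hR0 : (0 : ℝ) < R := by exact_mod_cast hR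
  have hX := Real.log_natCast_nonneg R
  have hH := mom_nonneg R 0
  set X := Real.log R with hXdef
  have hRexp : (R : ℝ) = Real.exp X := (Real.exp_log hR0).symm
  have h6 : mom R 0 ^ 6 ≤ (C * Real.exp (X / 100)) ^ 6 := pow_le_pow_left₀ hH (h R hR) 6
  calc (X * mom R 0 ^ 3 * R) ^ 2 = X ^ 2 * mom R 0 ^ 6 * (R : ℝ) ^ 2 := by ring
    _ ≤ X ^ 2 * (C * Real.exp (X / 100)) ^ 6 * (R : ℝ) ^ 2 := by gcongr
    _ = C ^ 6 * X ^ 2 * (Real.exp (X / 100) ^ 6 * Real.exp X ^ 2) := by rw [hRexp]; ring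
    _ = _ := by
      rw [← Real.exp_nat_mul, ← Real.exp_nat_mul, ← Real.exp_add]
      congr 2
      push_cast; ring

/-- The comparison of constants `10 - 99/16 > 3 (log 5 - 11/30)`, with the first moment absorbed
into the second. -/
lemma gap_inequality {N T1 T2 E x C₁ C₂ D : ℝ} (hN0 : 0 ≤ N) (hT1nn : 0 ≤ T1) (hT2nn : 0 ≤ T2)
    (hEnn : 0 ≤ E) (hx50 : 50 ≤ x) (hC₂x : C₂ ≤ x) (hC₁x : 100 * C₁ ≤ x)
    (hone : 8 * x * T1 ≤ 5 / 2 * T2 + C₂ * T1)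
    (hineq : (10 - (99 * x + 12) / (2 * (8 * x))) * (N * T2 - E) ≤
      N * (3 * (Real.log 5 - 11 / 30) * T2 + C₁ * T1) + D * E) :
    0.025 * (N * T2) ≤ (10 + D) * E := by
  have hx0 : 0 < x := by linarith
  have hT1 : x * T1 ≤ T2 := by
    have := mul_le_mul_of_nonneg_right hC₂x hT1nn
    have h0 : 0 ≤ x * T1 := by positivity
    linarith
  have hC₁T : C₁ * T1 ≤ T2 / 100 := by
    have := mul_le_mul_of_nonneg_right hC₁x hT1nn
    linarith
  have hGx : (99 * x + 12) / (2 * (8 * x)) ≤ 6.2025 := by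
    rw [div_le_iff₀ (by positivity)]; linarith
  have hGx0 : 0 ≤ (99 * x + 12) / (2 * (8 * x)) := by positivity
  have hκ := log_five_lt
  have h1 : 0 ≤ N * T2 := by positivity
  have h2 : N * (C₁ * T1) ≤ N * (T2 / 100) := mul_le_mul_of_nonneg_left hC₁T hN0
  have h3 : 3 * (Real.log 5 - 11 / 30) * (N * T2) ≤ 3.7525 * (N * T2) :=
    mul_le_mul_of_nonneg_right hκ.le h1
  have h4 : (10 - (99 * x + 12) / (2 * (8 * x))) * E ≤ 10 * E :=
    mul_le_mul_of_nonneg_right (by linarith) hEnn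
  have h5 : 3.7975 * (N * T2) ≤ (10 - (99 * x + 12) / (2 * (8 * x))) * (N * T2) :=
    mul_le_mul_of_nonneg_right (by linarith) h1
  linarith

/-- For large `x`, the main term `exp (33 x)` exceeds the accumulated rounding errors; only
`exp u ≥ u ^ 4 / 4!` is used. -/
lemma not_exp_le {C x : ℝ} (hC : 0 < C) (hx : C * 613 * 64 * 40 * 400 < x) :
    ¬ 0.025 * Real.exp (33 * x) ≤ C * 613 * 64 * x ^ 3 * Real.exp (32.48 * x) := by
  intro hfin
  have hx0 : 0 < x := lt_trans (by positivity) hx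
  have hsplit : Real.exp (33 * x) = Real.exp (0.52 * x) * Real.exp (32.48 * x) := by
    rw [← Real.exp_add]; congr 1; ring
  rw [hsplit, ← mul_assoc] at hfin
  have hfin2 := le_of_mul_le_mul_right hfin (Real.exp_pos _)
  have hfour := Real.pow_div_factorial_le_exp (0.52 * x) (by positivity) 4
  have h24 : (0.52 * x) ^ 4 / (Nat.factorial 4 : ℝ) ≥ x ^ 3 * x / 400 := by
    have : (Nat.factorial 4 : ℝ) = 24 := by norm_num [Nat.factorial]
    rw [this]
    have : 0 ≤ x ^ 4 := by positivity
    nlinarith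
  have hx3 : 0 < x ^ 3 := by positivity
  have : x ^ 3 * x ≤ x ^ 3 * (C * 613 * 64 * 40 * 400) := by nlinarith
  have := le_of_mul_le_mul_left this hx3
  linarith

/-- The sieve at level `R = k ^ 8` on the interval of length `N = k ^ 33`. The exponents make
`log N / log R = 33 / 8`, just above the `4` needed to absorb the rounding errors. -/
lemma exists_cardFactors_triple_le (M : ℕ) :
    ∃ n, M ≤ n ∧ ArithmeticFunction.cardFactors (triple n) ≤ 9 := by
  by_contra! hcon
  obtain ⟨C₁, hC₁, hmain⟩ := exists_main_inequality
  obtain ⟨C₂, hC₂, hone⟩ := exists_mom_one_le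
  obtain ⟨C₃, hC₃, herr⟩ := exists_err_le
  -- the contradiction appears as soon as `log k` exceeds `x₀`
  set x₀ : ℝ := 51 + 100 * C₁ + C₂ + C₃ * 613 * 64 * 40 * 400 with hx₀
  set k : ℕ := ⌈Real.exp x₀⌉₊ + M with hk
  have hkexp : Real.exp x₀ ≤ k := by
    refine (Nat.le_ceil _).trans ?_
    exact_mod_cast Nat.le_add_right _ _
  have hk0 : (0 : ℝ) < k := (Real.exp_pos _).trans_le hkexp
  have hk1 : 1 ≤ k := by exact_mod_cast hk0
  set x : ℝ := Real.log k with hx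
  have hxx : x₀ ≤ x := (Real.le_log_iff_exp_le hk0).2 hkexp
  have hC₃0 : 0 < C₃ * 613 * 64 * 40 * 400 := by positivity
  have hx50 : 50 ≤ x := by linarith
  have hkx : (k : ℝ) = Real.exp x := (Real.exp_log hk0).symm
  set R : ℕ := k ^ 8 with hR
  set N : ℕ := k ^ 33 with hN
  have hR1 : 1 ≤ R := Nat.one_le_pow _ _ hk1
  have hX : Real.log R = 8 * x := by rw [hR]; push_cast; rw [Real.log_pow]; push_cast; rfl
  have hlogN : Real.log N = 33 * x := by rw [hN]; push_cast; rw [Real.log_pow]; push_cast; rfl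
  have hRexp : (R : ℝ) = Real.exp (8 * x) := by
    rw [← hX, Real.exp_log (by exact_mod_cast hR1)]
  have hN1 : 1 ≤ N := Nat.one_le_pow _ _ hk1
  have hN0 : (0 : ℝ) < N := by exact_mod_cast hN1
  have hNexp : (N : ℝ) = Real.exp (33 * x) := by rw [← hlogN, Real.exp_log hN0]
  have hR2 : 2 ≤ R := by
    by_contra hlt
    have : R = 1 := by omega
    rw [this] at hX
    simp at hX
    linarith
  set A : ℕ := Nat.log 2 (62208 * N ^ 3) with hA
  set G : ℝ := 99 * x + 12 with hG
  have hMN : M ≤ N := by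
    calc M ≤ k := Nat.le_add_left _ _
      _ ≤ k ^ 33 := Nat.le_self_pow (by norm_num) k
  have hlogF : Real.log ((62208 * N ^ 3 : ℕ) : ℝ) ≤ G := by
    push_cast
    rw [Real.log_mul (by norm_num) (by positivity), Real.log_pow, hlogN]
    push_cast
    linarith [log_const_le]
  have hA_le : (A : ℝ) ≤ 2 * G := by
    have h1 : 2 ^ A ≤ 62208 * N ^ 3 := Nat.pow_log_le_self 2 (by positivity)
    have h2 : Real.log ((2 ^ A : ℕ) : ℝ) ≤ Real.log ((62208 * N ^ 3 : ℕ) : ℝ) :=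
      Real.log_le_log (by positivity) (by exact_mod_cast h1)
    push_cast [Real.log_pow] at h2
    push_cast at hlogF
    have h3 := Real.log_two_gt_d9
    have hA0 : (0 : ℝ) ≤ A := by positivity
    nlinarith
  have hineq := hmain R N A G hR2
    (fun n hn => hcon n (hMN.trans (mem_Ico.1 hn).1))
    (fun n hn => (triple_le (mem_Ico.1 hn).2).trans_lt (Nat.lt_pow_succ_log_self (by norm_num) _))
    (fun n hn => le_trans (Real.log_le_log (by exact_mod_cast triple_pos n)
      (by exact_mod_cast triple_le (mem_Ico.1 hn).2)) hlogF)
    (by rw [hX]; linarith)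
  have hone' := hone R hR1
  have herr' := herr R hR1
  have hT2 := sq_log_le_mom_two hR1
  rw [hX] at hineq hone' herr' hT2
  have hT1nn := mom_nonneg R 1
  have hEnn := err_nonneg R
  set T1 := mom R 1 with hT1def
  set T2 := mom R 2 with hT2def
  set E := err R with hEdef
  have hx0 : 0 < x := by linarith
  have hC₂x : C₂ ≤ x := by linarith
  have hT2one : 1 ≤ T2 := by
    have h1 : (1 : ℝ) ≤ (8 * x) ^ 2 := one_le_pow₀ (by linarith)
    linarith
  have hgap : 0.025 * (N * T2) ≤ (10 + 3 * (R : ℝ) ^ 2 * (A + 1)) * E :=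
    gap_inequality hN0.le hT1nn (by linarith) hEnn hx50 hC₂x (by linarith) hone' hineq
  have hfin : 0.025 * Real.exp (33 * x) ≤ C₃ * 613 * 64 * x ^ 3 * Real.exp (32.48 * x) := by
    have h1 : 0.025 * (N : ℝ) ≤ 0.025 * (N * T2) := by nlinarith
    have hexp1 : 1 ≤ Real.exp (16 * x) := Real.one_le_exp (by positivity)
    have hR2exp : (R : ℝ) ^ 2 = Real.exp (16 * x) := by
      rw [hRexp, ← Real.exp_nat_mul]; congr 1; push_cast; ring
    have h2 : 10 + 3 * (R : ℝ) ^ 2 * (A + 1) ≤ 613 * x * Real.exp (16 * x) := by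
      rw [hR2exp]
      have h3 : (A : ℝ) + 1 ≤ 201 * x := by linarith
      nlinarith [mul_le_mul_of_nonneg_left h3 (Real.exp_pos (16 * x)).le]
    calc 0.025 * Real.exp (33 * x) = 0.025 * N := by rw [hNexp]
      _ ≤ (10 + 3 * (R : ℝ) ^ 2 * (A + 1)) * E := h1.trans hgap
      _ ≤ (613 * x * Real.exp (16 * x)) *
          (C₃ * (8 * x) ^ 2 * Real.exp (8 * x * (206 / 100))) :=
        mul_le_mul h2 herr' hEnn (by positivity)
      _ = C₃ * 613 * 64 * x ^ 3 * (Real.exp (16 * x) * Real.exp (8 * x * (206 / 100))) := by ring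
      _ = _ := by rw [← Real.exp_add]; congr 2; ring
  exact absurd hfin (not_exp_le hC₃ (by linarith))

end OmegaSieve

end

/-- There are infinitely many integers `m ≥ 2` with `Ω(m³ − m) ≤ 11`,
where `Ω` counts prime divisors with multiplicity. -/
theorem infinite_Omega_cube_sub_self_le_eleven :
    {m : ℕ | 2 ≤ m ∧ ArithmeticFunction.cardFactors (m ^ 3 - m) ≤ 11}.Infinite := by
  refine Set.infinite_of_forall_exists_gt fun M => ?_
  obtain ⟨n, hMn, hn⟩ := OmegaSieve.exists_cardFactors_triple_le M
  refine ⟨36 * n + 6, ⟨by omega, ?_⟩, by omega⟩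
  have h : (36 * n + 6) ^ 3 - (36 * n + 6) = 2 * 3 * OmegaSieve.triple n := by
    refine Nat.sub_eq_of_eq_add ?_
    unfold OmegaSieve.triple
    ring
  rw [h, ArithmeticFunction.cardFactors_mul (by norm_num) (OmegaSieve.triple_pos n).ne',
    ArithmeticFunction.cardFactors_mul (by norm_num) (by norm_num),
    ArithmeticFunction.cardFactors_apply_prime Nat.prime_two,
    ArithmeticFunction.cardFactors_apply_prime Nat.prime_three]
  omega
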